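/- arXiv:1408.0975 — 12 statements merged into one kernel-verified Lean document; each statement's English description precedes it below -/
import Mathlib

section
/- Let Λ : 𝔤 → End(𝔤) be a linear map such that every Λ(X) is skew-adjoint with respect to ⟨·,·⟩, i.e. ⟨Λ(X)Y, Z⟩ + ⟨Y, Λ(X)Z⟩ = 0 for all X,Y,Z. Then the torsion 3-tensor T(X,Y,Z) := ⟨Λ(X)Y − Λ(Y)X − [X,Y], Z⟩ is totally skew-symmetric (alternating in all three arguments) if and only if Λ(X)X = 0 for every X ∈ 𝔤. -/
/-!
Skew-adjointness of `Λ X` and ad-invariance give `T(X,Y,X) = -⟨Y, Λ(X)X⟩`. If `T` is totally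
skew-symmetric the left side vanishes, so `Λ(X)X` is orthogonal to every `Y`, hence zero.
Conversely, polarizing `Λ(X)X = 0` gives `Λ(Y)X = -Λ(X)Y`, so that
`T(X,Y,Z) = 2⟨Λ(X)Y, Z⟩ - ⟨[X,Y], Z⟩`: this is skew in `X, Y` by polarization and skew in `Y, Z`
because `Λ X` and `ad X` are both skew-adjoint.
-/

/-- The torsion 3-tensor `T(X,Y,Z) := ⟨Λ(X)Y − Λ(Y)X − [X,Y], Z⟩` of a Nomizu map `Λ`
with respect to a bilinear form `ip`. -/
noncomputable def Tor3 (𝔤 : Type*) [LieRing 𝔤] [LieAlgebra ℝ 𝔤]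
    (ip : 𝔤 →ₗ[ℝ] 𝔤 →ₗ[ℝ] ℝ) (Λ : 𝔤 →ₗ[ℝ] 𝔤 →ₗ[ℝ] 𝔤) (X Y Z : 𝔤) : ℝ :=
  ip (Λ X Y - Λ Y X - ⁅X, Y⁆) Z

/-- Let `𝔤` be a finite-dimensional real Lie algebra with an ad-invariant
inner product `⟨·,·⟩`, and `Λ : 𝔤 → End(𝔤)` a linear map with every `Λ(X)` skew-adjoint.
Then the torsion 3-tensor `T(X,Y,Z) := ⟨Λ(X)Y − Λ(Y)X − [X,Y], Z⟩` is totally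
skew-symmetric if and only if `Λ(X)X = 0` for every `X`. -/
theorem stmt_2 (𝔤 : Type*) [LieRing 𝔤] [LieAlgebra ℝ 𝔤] [FiniteDimensional ℝ 𝔤]
    (ip : 𝔤 →ₗ[ℝ] 𝔤 →ₗ[ℝ] ℝ)
    (hsymm : ∀ X Y : 𝔤, ip X Y = ip Y X)
    (hpos : ∀ X : 𝔤, X ≠ 0 → 0 < ip X X)
    (hinv : ∀ X Y Z : 𝔤, ip ⁅X, Y⁆ Z + ip Y ⁅X, Z⁆ = 0)
    (Λ : 𝔤 →ₗ[ℝ] 𝔤 →ₗ[ℝ] 𝔤)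
    (hskew : ∀ X Y Z : 𝔤, ip (Λ X Y) Z + ip Y (Λ X Z) = 0) :
    (∀ X Y Z : 𝔤,
        Tor3 𝔤 ip Λ X Y Z = - Tor3 𝔤 ip Λ Y X Z
      ∧ Tor3 𝔤 ip Λ X Y Z = - Tor3 𝔤 ip Λ X Z Y)
    ↔ (∀ X : 𝔤, Λ X X = 0) := by
  constructor
  · intro h X
    by_contra hne
    have hp := hpos _ hne
    -- `T(X,Y,X) = 0` for `Y = Λ(X)X` says `⟨Λ(X)X, Λ(X)X⟩ = 0`.
    set Y := Λ X X with hY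
    have h1 := (h X Y X).1
    have h2 := (h Y X X).2
    have h3 := hskew X Y X
    have h4 := hskew Y X X
    have h5 := hinv X Y X
    have h6 := hsymm (Λ Y X) X
    simp only [Tor3, map_sub, LinearMap.sub_apply, lie_self, map_zero] at h1 h2 h5
    rw [← hY] at h3
    linarith
  · intro h X Y Z
    have hΛ : ∀ A B : 𝔤, Λ B A = -Λ A B := by
      intro A B
      have hAB := h (A + B)
      simp only [map_add, LinearMap.add_apply, h, zero_add, add_zero] at hAB
      exact eq_neg_of_add_eq_zero_left hAB
    have h1 := hskew X Y Z
    have h2 := hinv X Y Z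
    have h3 := hsymm Y (Λ X Z)
    have h4 := hsymm Y ⁅X, Z⁆
    have h5 : ip ⁅Y, X⁆ Z = -ip ⁅X, Y⁆ Z := by
      rw [← lie_skew, map_neg, LinearMap.neg_apply]
    simp only [Tor3, map_sub, LinearMap.sub_apply, hΛ X Y, hΛ X Z, map_neg, LinearMap.neg_apply]
    constructor <;> linarith
end

section
/- Let Λ : 𝔤 → End(𝔤) be a linear map with Λ(X)X = 0 for all X ∈ 𝔤. Then every endomorphism Λ(Z) is a derivation of 𝔤 (i.e. Λ(Z)[X,Y] = [Λ(Z)X, Y] + [X, Λ(Z)Y] for all X,Y,Z ∈ 𝔤) if and only if the identity (∇_Z T)(X,Y) = 2·( R(Z,X)Y − Λ(Y)([Z,X] − Λ(Z)X) ) holds for all X,Y,Z ∈ 𝔤. -/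
/-!
Since `Λ(X)X = 0`, polarization makes `(X, Y) ↦ Λ(X)Y` antisymmetric, so `T(X,Y) = 2 Λ(X)Y - [X,Y]`.
Likewise the term `-Λ([Z,X])Y` of the curvature cancels against `-Λ(Y)[Z,X]`. Expanding, the two
sides of the identity differ exactly by the defect `Λ(Z)[X,Y] - ([Λ(Z)X,Y] + [X,Λ(Z)Y])` of `Λ(Z)`
from being a derivation (`covTorOf_eq_two_smul_sub`), so the identity holds if and only if this
defect vanishes.
-/

/-- The torsion `T(X,Y) := Λ(X)Y − Λ(Y)X − [X,Y]` of a Nomizu map. -/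
noncomputable def TorOf (𝔤 : Type*) [LieRing 𝔤] [LieAlgebra ℝ 𝔤]
    (Λ : 𝔤 →ₗ[ℝ] 𝔤 →ₗ[ℝ] 𝔤) (X Y : 𝔤) : 𝔤 :=
  Λ X Y - Λ Y X - ⁅X, Y⁆

/-- The curvature `R(Z,X) := Λ(Z)∘Λ(X) − Λ(X)∘Λ(Z) − Λ([Z,X])`, applied to `Y`. -/
noncomputable def CurvOf (𝔤 : Type*) [LieRing 𝔤] [LieAlgebra ℝ 𝔤]
    (Λ : 𝔤 →ₗ[ℝ] 𝔤 →ₗ[ℝ] 𝔤) (Z X Y : 𝔤) : 𝔤 :=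
  Λ Z (Λ X Y) - Λ X (Λ Z Y) - Λ ⁅Z, X⁆ Y

/-- The covariant derivative of the torsion,
`(∇_Z T)(X,Y) := Λ(Z)(T(X,Y)) − T(Λ(Z)X, Y) − T(X, Λ(Z)Y)`. -/
noncomputable def CovTorOf (𝔤 : Type*) [LieRing 𝔤] [LieAlgebra ℝ 𝔤]
    (Λ : 𝔤 →ₗ[ℝ] 𝔤 →ₗ[ℝ] 𝔤) (Z X Y : 𝔤) : 𝔤 :=
  Λ Z (TorOf 𝔤 Λ X Y) - TorOf 𝔤 Λ (Λ Z X) Y - TorOf 𝔤 Λ X (Λ Z Y)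

theorem nomizu_antisymm (𝔤 : Type*) [LieRing 𝔤] [LieAlgebra ℝ 𝔤]
    (Λ : 𝔤 →ₗ[ℝ] 𝔤 →ₗ[ℝ] 𝔤) (halt : ∀ X : 𝔤, Λ X X = 0) (X Y : 𝔤) :
    Λ X Y = -Λ Y X := by
  have h := halt (X + Y)
  simp only [map_add, LinearMap.add_apply, halt, zero_add, add_zero] at h
  exact eq_neg_of_add_eq_zero_right h

/-- The two sides of the torsion identity differ by the derivation defect of `Λ Z`, for each
fixed triple `X, Y, Z`. -/
theorem covTorOf_eq_two_smul_sub (𝔤 : Type*) [LieRing 𝔤] [LieAlgebra ℝ 𝔤]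
    (Λ : 𝔤 →ₗ[ℝ] 𝔤 →ₗ[ℝ] 𝔤) (halt : ∀ X : 𝔤, Λ X X = 0) (Z X Y : 𝔤) :
    CovTorOf 𝔤 Λ Z X Y
      = (2 : ℝ) • (CurvOf 𝔤 Λ Z X Y - Λ Y (⁅Z, X⁆ - Λ Z X))
        - (Λ Z ⁅X, Y⁆ - (⁅Λ Z X, Y⁆ + ⁅X, Λ Z Y⁆)) := by
  have hanti := nomizu_antisymm 𝔤 Λ halt
  simp only [CovTorOf, TorOf, CurvOf, map_sub]
  rw [hanti Y X, hanti (Λ Z Y) X, hanti (Λ Z X) Y, hanti ⁅Z, X⁆ Y, map_neg]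
  module

/-- Let `Λ : 𝔤 → End(𝔤)` be a linear map with `Λ(X)X = 0` for all `X`.
Then every endomorphism `Λ(Z)` is a derivation of `𝔤` if and only if
`(∇_Z T)(X,Y) = 2·( R(Z,X)Y − Λ(Y)([Z,X] − Λ(Z)X) )` holds for all `X,Y,Z ∈ 𝔤`. -/
theorem stmt_4 (𝔤 : Type*) [LieRing 𝔤] [LieAlgebra ℝ 𝔤]
    (Λ : 𝔤 →ₗ[ℝ] 𝔤 →ₗ[ℝ] 𝔤)
    (halt : ∀ X : 𝔤, Λ X X = 0) :
    (∀ Z X Y : 𝔤, Λ Z ⁅X, Y⁆ = ⁅Λ Z X, Y⁆ + ⁅X, Λ Z Y⁆)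
    ↔ (∀ X Y Z : 𝔤,
        CovTorOf 𝔤 Λ Z X Y
          = (2 : ℝ) • (CurvOf 𝔤 Λ Z X Y - Λ Y (⁅Z, X⁆ - Λ Z X))) := by
  have hT := covTorOf_eq_two_smul_sub 𝔤 Λ halt
  constructor
  · intro h X Y Z
    rw [hT, h Z X Y, sub_self, sub_zero]
  · intro h Z X Y
    have hXY := h X Y Z
    rwa [hT, sub_eq_self, sub_eq_zero] at hXY
end

section
/- Let Λ : 𝔤 → End(𝔤) be a linear map with Λ(X)X = 0 for all X ∈ 𝔤. Then the equation R(Z,X)Y = Λ(Y)([Z,X] − Λ(Z)X) holds for all X,Y,Z ∈ 𝔤 if and only if [Λ(Z), Λ(Y)] = Λ(Λ(Z)Y) holds as endomorphisms of 𝔤 for all Y,Z ∈ 𝔤. -/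
theorem skew_of_alternating {𝔤 : Type*} [LieRing 𝔤] [LieAlgebra ℝ 𝔤]
    (Λ : 𝔤 →ₗ[ℝ] 𝔤 →ₗ[ℝ] 𝔤) (halt : ∀ X : 𝔤, Λ X X = 0) (X Y : 𝔤) :
    Λ X Y = -Λ Y X := by
  have h := halt (X + Y)
  simp only [map_add, LinearMap.add_apply, halt, zero_add, add_zero] at h
  exact eq_neg_of_add_eq_zero_right h

/-- Let `Λ : 𝔤 → End(𝔤)` be a linear map with `Λ(X)X = 0` for all `X ∈ 𝔤`.
Then the equation `R(Z,X)Y = Λ(Y)([Z,X] − Λ(Z)X)` holds for all `X,Y,Z ∈ 𝔤` if and only if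
`[Λ(Z), Λ(Y)] = Λ(Λ(Z)Y)` holds as endomorphisms of `𝔤` for all `Y,Z ∈ 𝔤`. -/
theorem stmt_6 (𝔤 : Type*) [LieRing 𝔤] [LieAlgebra ℝ 𝔤]
    (Λ : 𝔤 →ₗ[ℝ] 𝔤 →ₗ[ℝ] 𝔤)
    (halt : ∀ X : 𝔤, Λ X X = 0) :
    (∀ X Y Z : 𝔤, CurvOf 𝔤 Λ Z X Y = Λ Y (⁅Z, X⁆ - Λ Z X))
    ↔ (∀ Z Y X : 𝔤, Λ Z (Λ Y X) - Λ Y (Λ Z X) = Λ (Λ Z Y) X) := by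
  have skew := skew_of_alternating Λ halt
  have curv_iff (X Y Z : 𝔤) : CurvOf 𝔤 Λ Z X Y = Λ Y (⁅Z, X⁆ - Λ Z X) ↔
      Λ Z (Λ X Y) + Λ X (Λ Y Z) + Λ Y (Λ Z X) = 0 := by
    rw [CurvOf, map_sub, skew Y ⁅Z, X⁆, skew Z Y, map_neg, ← sub_eq_zero]
    apply Eq.congr_left
    abel
  have deriv_iff (X Y Z : 𝔤) : Λ Z (Λ Y X) - Λ Y (Λ Z X) = Λ (Λ Z Y) X ↔
      Λ Z (Λ X Y) + Λ X (Λ Y Z) + Λ Y (Λ Z X) = 0 := by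
    rw [skew (Λ Z Y) X, skew Z Y, skew Y X, map_neg, map_neg, neg_neg, ← sub_eq_zero,
      ← neg_eq_zero]
    apply Eq.congr_left
    abel
  exact ⟨fun h Z Y X => (deriv_iff X Y Z).2 ((curv_iff X Y Z).1 (h X Y Z)),
    fun h X Y Z => (curv_iff X Y Z).2 ((deriv_iff X Y Z).1 (h Z Y X))⟩
end

section
/- Let 𝔤 be a finite-dimensional Lie algebra over a field of characteristic zero such that 𝔤 decomposes as the direct sum of its center z(𝔤) and its derived algebra [𝔤,𝔤], where [𝔤,𝔤] is a semisimple Lie algebra (equivalently, has nondegenerate Killing form). Then every derivation D of 𝔤 satisfies D(z(𝔤)) ⊆ z(𝔤) and D([𝔤,𝔤]) ⊆ [𝔤,𝔤], and there exists X ∈ 𝔤 such that D(Y) = [X,Y] for all Y ∈ [𝔤,𝔤]; i.e. D is the direct sum of an endomorphism of the center and an inner derivation of the semisimple part. -/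
/-! A derivation always preserves the center and the derived ideal, by the Leibniz rule alone. Its
restriction to the derived ideal is a derivation of a Lie algebra with nondegenerate Killing form,
hence inner by `LieDerivation.IsKilling.exists_eq_ad`. -/

theorem LieDerivation.apply_mem_center {R L : Type*} [CommRing R] [LieRing L] [LieAlgebra R L]
    (D : LieDerivation R L L) {z : L} (hz : z ∈ LieAlgebra.center R L) :
    D z ∈ LieAlgebra.center R L := by
  rw [LieModule.mem_maxTrivSubmodule] at hz ⊢
  intro y
  have h := D.apply_lie_eq_add y z
  rw [hz, hz, map_zero, add_zero] at h
  exact h.symm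

theorem LieDerivation.apply_mem_derivedSeries_one {R L : Type*} [CommRing R] [LieRing L]
    [LieAlgebra R L] (D : LieDerivation R L L) {y : L}
    (hy : y ∈ LieAlgebra.derivedSeries R L 1) :
    D y ∈ LieAlgebra.derivedSeries R L 1 := by
  have hlie (a b : L) : ⁅a, b⁆ ∈ LieAlgebra.derivedSeries R L 1 :=
    LieSubmodule.lie_mem_lie (LieSubmodule.mem_top a) (LieSubmodule.mem_top b)
  have hspan : y ∈ Submodule.span R
      {m | ∃ x ∈ (⊤ : LieIdeal R L), ∃ n ∈ (⊤ : LieIdeal R L), ⁅x, n⁆ = m} := by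
    rw [← LieSubmodule.lieIdeal_oper_eq_linear_span']
    exact hy
  clear hy
  induction hspan using Submodule.span_induction with
  | mem m hm =>
    obtain ⟨a, -, b, -, rfl⟩ := hm
    rw [D.apply_lie_eq_add]
    exact add_mem (hlie _ _) (hlie _ _)
  | zero => rw [map_zero]; exact zero_mem _
  | add a b _ _ iha ihb =>
    rw [map_add]
    exact add_mem iha ihb
  | smul c a _ iha => rw [map_smul]; exact SMulMemClass.smul_mem c iha

/-- The restriction of a derivation to an ideal that it preserves. -/
def LieDerivation.restrictIdeal {R L : Type*} [CommRing R] [LieRing L] [LieAlgebra R L]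
    (D : LieDerivation R L L) (I : LieIdeal R L) (h : ∀ y ∈ I, D y ∈ I) :
    LieDerivation R I I where
  toLinearMap := (D : L →ₗ[R] L).restrict (p := I.toSubmodule) (q := I.toSubmodule) h
  leibniz' a b := Subtype.ext (D.apply_lie_eq_sub a b)

/-- Let `𝔤` be a finite-dimensional Lie algebra over a field of characteristic
zero which decomposes as the direct sum of its center and its derived algebra, with the
derived algebra semisimple (i.e. with nondegenerate Killing form).  Then every derivation
`D` of `𝔤` preserves the center and the derived algebra, and restricts to an inner
derivation on the derived algebra. -/
theorem stmt_7 (K : Type*) [Field K] [CharZero K]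
    (𝔤 : Type*) [LieRing 𝔤] [LieAlgebra K 𝔤] [FiniteDimensional K 𝔤]
    (hcompl : IsCompl (LieAlgebra.center K 𝔤).toSubmodule
      (LieAlgebra.derivedSeries K 𝔤 1).toSubmodule)
    (hkilling : (killingForm K ↥(LieAlgebra.derivedSeries K 𝔤 1)).Nondegenerate)
    (D : LieDerivation K 𝔤 𝔤) :
    (∀ Y ∈ LieAlgebra.center K 𝔤, D Y ∈ LieAlgebra.center K 𝔤)
    ∧ (∀ Y ∈ LieAlgebra.derivedSeries K 𝔤 1, D Y ∈ LieAlgebra.derivedSeries K 𝔤 1)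
    ∧ (∃ X : 𝔤, ∀ Y ∈ LieAlgebra.derivedSeries K 𝔤 1, D Y = ⁅X, Y⁆) := by
  have hder : ∀ Y ∈ LieAlgebra.derivedSeries K 𝔤 1, D Y ∈ LieAlgebra.derivedSeries K 𝔤 1 :=
    fun _ hY ↦ D.apply_mem_derivedSeries_one hY
  refine ⟨fun _ hY ↦ D.apply_mem_center hY, hder, ?_⟩
  have : LieAlgebra.IsKilling K (LieAlgebra.derivedSeries K 𝔤 1) := by
    constructor
    rw [← LieSubmodule.toSubmodule_eq_bot]
    exact (LieIdeal.coe_killingCompl_top K _).trans <|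
      LinearMap.separatingLeft_iff_ker_eq_bot.mp hkilling.1
  obtain ⟨X, hX⟩ := LieDerivation.IsKilling.exists_eq_ad (D.restrictIdeal _ hder)
  refine ⟨X, fun Y hY ↦ ?_⟩
  have h := congrArg Subtype.val (DFunLike.congr_fun hX ⟨Y, hY⟩)
  rw [LieDerivation.ad_apply_apply] at h
  exact h.symm
end

section
/- For all X,Y ∈ 𝔪 the identity B(X,Y) = Σ_{i=1}^{n} Q([X,Zᵢ]_𝔪, [Y,Zᵢ]_𝔪) + 2·A(X,Y) holds, where B(X,Y) := −κ(X,Y) is the negative of the Killing form of 𝔤 restricted to 𝔪. -/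
/-!
Write `a = ad X`, `b = ad Y`. Since `p𝔨 + p𝔪 = 1`, the Killing form splits as
`κ(X,Y) = tr(a b) = tr(a b p𝔪) + tr(a b p𝔨)`. Orthonormality gives `p𝔪 = ∑ᵢ Q(·, Zᵢ) Zᵢ`, hence
`tr(f p𝔪) = ∑ᵢ Q(f Zᵢ, Zᵢ)` for every endomorphism `f` (`trace_comp_eq_sum`). With `f = a b` and
invariance, the first trace is `-∑ᵢ Q([Y,Zᵢ],[X,Zᵢ])`, which is minus the `𝔪`-sum minus `A(X,Y)`.
For the second, `[𝔨,𝔪] ⊆ 𝔪` gives `b p𝔨 = p𝔪 b p𝔨`, so by cyclicity it equals `tr(b p𝔨 a p𝔪)`; with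
`f = b p𝔨 a` and invariance this is `-∑ᵢ Q([X,Zᵢ]_𝔨,[Y,Zᵢ]) = -A(X,Y)`.
-/

open scoped BigOperators

/-- The trace of `f ∘ p` when `p = ∑ᵢ Q(·, Zᵢ) Zᵢ`. -/
theorem trace_comp_eq_sum {V : Type*} [AddCommGroup V] [Module ℝ V] [FiniteDimensional ℝ V]
    (Q : V →ₗ[ℝ] V →ₗ[ℝ] ℝ) {n : ℕ} (Z : Fin n → V) (p : V →ₗ[ℝ] V)
    (hp : ∀ v, p v = ∑ i, Q v (Z i) • Z i) (f : V →ₗ[ℝ] V) :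
    LinearMap.trace ℝ V (f ∘ₗ p) = ∑ i, Q (f (Z i)) (Z i) := by
  have h : f ∘ₗ p = ∑ i, (Q.flip (Z i)).smulRight (f (Z i)) := by
    ext v
    simp [hp, LinearMap.sum_apply]
  rw [h, map_sum]
  simp [LinearMap.trace_smulRight]

/-- Fourier expansion of a vector in the span of a `Q`-orthonormal family. -/
theorem eq_sum_of_mem_span {V : Type*} [AddCommGroup V] [Module ℝ V]
    (Q : V →ₗ[ℝ] V →ₗ[ℝ] ℝ) {n : ℕ} (Z : Fin n → V)
    (hZon : ∀ i j, Q (Z i) (Z j) = if i = j then 1 else 0)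
    {w : V} (hw : w ∈ Submodule.span ℝ (Set.range Z)) : w = ∑ i, Q w (Z i) • Z i := by
  have h : Set.EqOn (LinearMap.id : V →ₗ[ℝ] V)
      (∑ i, (Q.flip (Z i)).smulRight (Z i) : V →ₗ[ℝ] V) (Set.range Z) := by
    rintro _ ⟨j, rfl⟩
    simp [LinearMap.sum_apply, hZon]
  simpa [LinearMap.sum_apply] using LinearMap.eqOn_span h hw

/-- For a reductive decomposition `𝔤 = 𝔨 ⊕ 𝔪` which is `Q`-orthogonal, with
`Q` an invariant nondegenerate symmetric bilinear form, positive definite on `𝔪`, and a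
`Q`-orthonormal basis `Z₁,…,Z_n` of `𝔪`, the negative of the Killing form satisfies
`B(X,Y) = Σᵢ Q([X,Zᵢ]_𝔪, [Y,Zᵢ]_𝔪) + 2·A(X,Y)` for all `X,Y ∈ 𝔪`, where
`A(X,Y) := Σᵢ Q([X,Zᵢ]_𝔨, [Y,Zᵢ]_𝔨)`. -/
theorem stmt_9 (𝔤 : Type*) [LieRing 𝔤] [LieAlgebra ℝ 𝔤] [FiniteDimensional ℝ 𝔤]
    (Q : 𝔤 →ₗ[ℝ] 𝔤 →ₗ[ℝ] ℝ)
    (hQsymm : ∀ X Y : 𝔤, Q X Y = Q Y X)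
    (hQnondeg : LinearMap.BilinForm.Nondegenerate Q)
    (hQinv : ∀ X Y Z : 𝔤, Q ⁅X, Y⁆ Z + Q Y ⁅X, Z⁆ = 0)
    (𝔨 𝔪 : Submodule ℝ 𝔤)
    (h𝔨 : ∀ X ∈ 𝔨, ∀ Y ∈ 𝔨, ⁅X, Y⁆ ∈ 𝔨)
    (hcompl : IsCompl 𝔨 𝔪)
    (horth : ∀ X ∈ 𝔨, ∀ Y ∈ 𝔪, Q X Y = 0)
    (hQpos : ∀ X ∈ 𝔪, X ≠ 0 → 0 < Q X X)
    (h𝔨𝔪 : ∀ X ∈ 𝔨, ∀ Y ∈ 𝔪, ⁅X, Y⁆ ∈ 𝔪)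
    (p𝔨 p𝔪 : 𝔤 →ₗ[ℝ] 𝔤)
    (hp𝔨mem : ∀ X : 𝔤, p𝔨 X ∈ 𝔨) (hp𝔪mem : ∀ X : 𝔤, p𝔪 X ∈ 𝔪)
    (hpsum : ∀ X : 𝔤, p𝔨 X + p𝔪 X = X)
    (n : ℕ) (Z : Fin n → 𝔤)
    (hZmem : ∀ i, Z i ∈ 𝔪)
    (hZon : ∀ i j, Q (Z i) (Z j) = if i = j then 1 else 0)
    (hZspan : Submodule.span ℝ (Set.range Z) = 𝔪) :
    ∀ X ∈ 𝔪, ∀ Y ∈ 𝔪,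
      - killingForm ℝ 𝔤 X Y
        = (∑ i, Q (p𝔪 ⁅X, Z i⁆) (p𝔪 ⁅Y, Z i⁆))
          + 2 * ∑ i, Q (p𝔨 ⁅X, Z i⁆) (p𝔨 ⁅Y, Z i⁆) := by
  intro X _ Y hY
  have horth' : ∀ U ∈ 𝔪, ∀ V ∈ 𝔨, Q U V = 0 := fun U hU V hV => by
    rw [hQsymm]; exact horth V hV U hU
  have hinv : ∀ U V W : 𝔤, Q ⁅U, V⁆ W = - Q V ⁅U, W⁆ := fun U V W =>
    eq_neg_of_add_eq_zero_left (hQinv U V W)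
  -- The projection to `𝔪` in terms of the orthonormal basis.
  have hp : ∀ v, p𝔪 v = ∑ i, Q v (Z i) • Z i := fun v => by
    have hv : ∀ i, Q v (Z i) = Q (p𝔪 v) (Z i) := fun i => by
      conv_lhs => rw [← hpsum v]
      rw [map_add, LinearMap.add_apply, horth _ (hp𝔨mem v) _ (hZmem i), zero_add]
    simp only [hv]
    exact eq_sum_of_mem_span Q Z hZon (hZspan ▸ hp𝔪mem v)
  have hfix : ∀ w ∈ 𝔪, p𝔪 w = w := fun w hw => by
    rw [hp]; exact (eq_sum_of_mem_span Q Z hZon (hZspan ▸ hw)).symm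
  set a : 𝔤 →ₗ[ℝ] 𝔤 := (LieAlgebra.ad ℝ 𝔤 X : 𝔤 →ₗ[ℝ] 𝔤) with ha
  set b : 𝔤 →ₗ[ℝ] 𝔤 := (LieAlgebra.ad ℝ 𝔤 Y : 𝔤 →ₗ[ℝ] 𝔤) with hb
  have hav : ∀ v, a v = ⁅X, v⁆ := fun v => rfl
  have hbv : ∀ v, b v = ⁅Y, v⁆ := fun v => rfl
  have hκ : killingForm ℝ 𝔤 X Y = LinearMap.trace ℝ 𝔤 (a ∘ₗ b) := rfl
  have hbk : b ∘ₗ p𝔨 = p𝔪 ∘ₗ (b ∘ₗ p𝔨) := by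
    ext v
    simp only [LinearMap.comp_apply, hbv]
    refine (hfix _ ?_).symm
    rw [← lie_skew]
    exact 𝔪.neg_mem (h𝔨𝔪 _ (hp𝔨mem v) Y hY)
  have hsplit : a ∘ₗ b = (a ∘ₗ b) ∘ₗ p𝔪 + (a ∘ₗ p𝔪) ∘ₗ (b ∘ₗ p𝔨) := by
    have hm : (a ∘ₗ p𝔪) ∘ₗ (b ∘ₗ p𝔨) = a ∘ₗ (b ∘ₗ p𝔨) := by
      rw [LinearMap.comp_assoc, ← hbk]
    rw [hm]
    ext v
    simp only [LinearMap.comp_apply, LinearMap.add_apply, ← map_add]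
    rw [add_comm (p𝔪 v), hpsum]
  have hcyc : LinearMap.trace ℝ 𝔤 ((a ∘ₗ p𝔪) ∘ₗ (b ∘ₗ p𝔨))
      = LinearMap.trace ℝ 𝔤 ((b ∘ₗ p𝔨 ∘ₗ a) ∘ₗ p𝔪) :=
    LinearMap.trace_mul_comm ℝ (a ∘ₗ p𝔪) (b ∘ₗ p𝔨)
  -- Only the `𝔨`-component of the second argument pairs with `𝔨`.
  have hQk : ∀ U V : 𝔤, Q (p𝔨 U) V = Q (p𝔨 U) (p𝔨 V) := fun U V => by
    conv_lhs => rw [← hpsum V]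
    rw [map_add, horth _ (hp𝔨mem U) _ (hp𝔪mem V), add_zero]
  have hQm : ∀ U V : 𝔤, Q (p𝔪 U) V = Q (p𝔪 U) (p𝔪 V) := fun U V => by
    conv_lhs => rw [← hpsum V]
    rw [map_add, horth' _ (hp𝔪mem U) _ (hp𝔨mem V), zero_add]
  have hQsum : ∀ U V : 𝔤, Q U V = Q (p𝔨 U) (p𝔨 V) + Q (p𝔪 U) (p𝔪 V) := fun U V => by
    rw [← hQk, ← hQm, ← LinearMap.add_apply, ← map_add, hpsum]
  have h1 : ∀ i, Q ((a ∘ₗ b) (Z i)) (Z i)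
      = - (Q (p𝔨 ⁅X, Z i⁆) (p𝔨 ⁅Y, Z i⁆) + Q (p𝔪 ⁅X, Z i⁆) (p𝔪 ⁅Y, Z i⁆)) := fun i => by
    rw [LinearMap.comp_apply, hav, hbv, hinv, hQsymm, hQsum]
  have h2 : ∀ i, Q ((b ∘ₗ p𝔨 ∘ₗ a) (Z i)) (Z i)
      = - Q (p𝔨 ⁅X, Z i⁆) (p𝔨 ⁅Y, Z i⁆) := fun i => by
    rw [LinearMap.comp_apply, LinearMap.comp_apply, hav, hbv, hinv, hQk]
  rw [hκ, hsplit, map_add, hcyc, trace_comp_eq_sum Q Z p𝔪 hp, trace_comp_eq_sum Q Z p𝔪 hp]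
  simp only [h1, h2, Finset.sum_neg_distrib, Finset.sum_add_distrib]
  ring
end

section
/- For every α ∈ ℝ and all X,Y ∈ 𝔪, the Ricci tensor of the connection ∇^α satisfies Ric^α(X,Y) = ((1−α²)/4)·Σ_{i=1}^{n} Q([X,Zᵢ]_𝔪, [Y,Zᵢ]_𝔪) + A(X,Y) = ((1−α²)/4)·B(X,Y) + ((1+α²)/2)·A(X,Y), where B := −κ restricted to 𝔪; moreover the scalar curvature satisfies Scal^α = ((1−α²)/4)·Σ_{i,j=1}^{n} Q([Zᵢ,Zⱼ]_𝔪, [Zᵢ,Zⱼ]_𝔪) + Σ_{i=1}^{n} A(Zᵢ,Zᵢ). -/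
/-!
By invariance of `Q` the operators `ad X` are skew, so in `Q(R^α(X,Zᵢ)Zᵢ, Y)` every term can be
rewritten as a pairing of a component of `[X,Zᵢ]` with `[Y,Zᵢ]`. The `Λ^α(X)Λ^α(Zᵢ)Zᵢ` term vanishes
and, with `c = (1 - α)/2`, the `𝔪`-components contribute with coefficient
`c - c² = (1 - α²)/4`, the `𝔨`-components with coefficient `1`. Summing over `i` gives the
first formula, and tracing it gives the scalar curvature.

The second formula amounts to `-κ(X,Y) = Σᵢ Q([X,Zᵢ]_𝔪,[Y,Zᵢ]_𝔪) + 2 A(X,Y)`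
(`killingForm_eq_sum`). A trace of the form `tr(T ∘ p𝔪)` is `Σᵢ Q(T Zᵢ, Zᵢ)` (`trace_comp_proj`),
so `tr(ad X ad Y p𝔪)` contributes the full pairing of `[X,Zᵢ]` and `[Y,Zᵢ]`, up to sign. Since `ad Y`
maps `𝔨` into `𝔪`, the remaining part is `tr(ad X p𝔪 ad Y p𝔨) = tr(ad Y p𝔨 ad X p𝔪)`, which
is `-A(X,Y)`; cyclicity of the trace makes a basis of `𝔨` unnecessary.
-/

open scoped BigOperators

/-- The Nomizu map `Λ^α(X)Y := ((1−α)/2)·[X,Y]_𝔪` on a reductive decomposition,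
expressed via the projection `p𝔪` onto `𝔪`. -/
noncomputable def LamR (𝔤 : Type*) [LieRing 𝔤] [LieAlgebra ℝ 𝔤]
    (p𝔪 : 𝔤 →ₗ[ℝ] 𝔤) (α : ℝ) (X Y : 𝔤) : 𝔤 :=
  ((1 - α) / 2) • p𝔪 ⁅X, Y⁆

/-- The curvature
`R^α(X,Y)Z := Λ^α(X)(Λ^α(Y)Z) − Λ^α(Y)(Λ^α(X)Z) − Λ^α([X,Y]_𝔪)Z − [[X,Y]_𝔨, Z]`. -/
noncomputable def CurvR (𝔤 : Type*) [LieRing 𝔤] [LieAlgebra ℝ 𝔤]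
    (p𝔨 p𝔪 : 𝔤 →ₗ[ℝ] 𝔤) (α : ℝ) (X Y Z : 𝔤) : 𝔤 :=
  LamR 𝔤 p𝔪 α X (LamR 𝔤 p𝔪 α Y Z) - LamR 𝔤 p𝔪 α Y (LamR 𝔤 p𝔪 α X Z)
    - LamR 𝔤 p𝔪 α (p𝔪 ⁅X, Y⁆) Z - ⁅p𝔨 ⁅X, Y⁆, Z⁆

/-- The Ricci tensor `Ric^α(X,Y) := Σᵢ Q(R^α(X,Zᵢ)Zᵢ, Y)`. -/
noncomputable def RicR (𝔤 : Type*) [LieRing 𝔤] [LieAlgebra ℝ 𝔤]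
    (Q : 𝔤 →ₗ[ℝ] 𝔤 →ₗ[ℝ] ℝ) (p𝔨 p𝔪 : 𝔤 →ₗ[ℝ] 𝔤) (α : ℝ)
    {n : ℕ} (Z : Fin n → 𝔤) (X Y : 𝔤) : ℝ :=
  ∑ i, Q (CurvR 𝔤 p𝔨 p𝔪 α X (Z i) (Z i)) Y

/-- The `Q`-orthogonal projection onto `𝔪`, expanded in the orthonormal basis `Z`. -/
theorem proj_eq_sum {V : Type*} [AddCommGroup V] [Module ℝ V]
    (Q : V →ₗ[ℝ] V →ₗ[ℝ] ℝ) (𝔨 𝔪 : Submodule ℝ V)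
    (horth : ∀ X ∈ 𝔨, ∀ Y ∈ 𝔪, Q X Y = 0)
    (p𝔨 p𝔪 : V →ₗ[ℝ] V)
    (hp𝔨mem : ∀ X, p𝔨 X ∈ 𝔨) (hp𝔪mem : ∀ X, p𝔪 X ∈ 𝔪)
    (hpsum : ∀ X, p𝔨 X + p𝔪 X = X)
    {n : ℕ} (Z : Fin n → V) (hZmem : ∀ i, Z i ∈ 𝔪)
    (hZon : ∀ i j, Q (Z i) (Z j) = if i = j then 1 else 0)
    (hZspan : Submodule.span ℝ (Set.range Z) = 𝔪) (v : V) :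
    p𝔪 v = ∑ i, Q v (Z i) • Z i := by
  have hv : p𝔪 v ∈ Submodule.span ℝ (Set.range Z) := hZspan ▸ hp𝔪mem v
  obtain ⟨c, hc⟩ := (Submodule.mem_span_range_iff_exists_fun ℝ).1 hv
  have h : ∀ i, Q v (Z i) = c i := fun i => by
    conv_lhs => rw [← hpsum v, map_add, LinearMap.add_apply,
      horth _ (hp𝔨mem v) _ (hZmem i), ← hc]
    simp [hZon]
  simp only [h, hc]

theorem trace_comp_proj {V : Type*} [AddCommGroup V] [Module ℝ V] [FiniteDimensional ℝ V]
    (Q : V →ₗ[ℝ] V →ₗ[ℝ] ℝ) (p : V →ₗ[ℝ] V) {n : ℕ} (Z : Fin n → V)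
    (hp : ∀ v, p v = ∑ i, Q v (Z i) • Z i) (T : V →ₗ[ℝ] V) :
    LinearMap.trace ℝ V (T ∘ₗ p) = ∑ i, Q (T (Z i)) (Z i) := by
  have h : T ∘ₗ p = ∑ i, (Q.flip (Z i)).smulRight (T (Z i)) := by
    ext v
    simp [hp]
  rw [h, map_sum]
  simp

/-- The Killing form on `𝔪`: `-κ(X,Y) = Σᵢ Q([X,Zᵢ]_𝔪,[Y,Zᵢ]_𝔪) + 2 A(X,Y)`. Here `hp` is the
expansion of `p𝔪` in the orthonormal basis and `hQp` the orthogonality of the two components. -/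
theorem killingForm_eq_sum {𝔤 : Type*} [LieRing 𝔤] [LieAlgebra ℝ 𝔤] [FiniteDimensional ℝ 𝔤]
    (Q : 𝔤 →ₗ[ℝ] 𝔤 →ₗ[ℝ] ℝ)
    (hQsymm : ∀ X Y : 𝔤, Q X Y = Q Y X)
    (hQinv : ∀ X Y Z : 𝔤, Q ⁅X, Y⁆ Z + Q Y ⁅X, Z⁆ = 0)
    (p𝔨 p𝔪 : 𝔤 →ₗ[ℝ] 𝔤) (hpsum : ∀ X : 𝔤, p𝔨 X + p𝔪 X = X)
    (hQp : ∀ U V, Q (p𝔨 U) (p𝔪 V) = 0)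
    {n : ℕ} (Z : Fin n → 𝔤) (hp : ∀ v, p𝔪 v = ∑ i, Q v (Z i) • Z i)
    (X Y : 𝔤) (hY : ∀ U, p𝔪 ⁅Y, p𝔨 U⁆ = ⁅Y, p𝔨 U⁆) :
    - killingForm ℝ 𝔤 X Y = ∑ i, Q (p𝔪 ⁅X, Z i⁆) (p𝔪 ⁅Y, Z i⁆)
      + 2 * ∑ i, Q (p𝔨 ⁅X, Z i⁆) (p𝔨 ⁅Y, Z i⁆) := by
  have hsplit : LieAlgebra.ad ℝ 𝔤 X ∘ₗ LieAlgebra.ad ℝ 𝔤 Y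
      = (LieAlgebra.ad ℝ 𝔤 X ∘ₗ LieAlgebra.ad ℝ 𝔤 Y) ∘ₗ p𝔪
        + (LieAlgebra.ad ℝ 𝔤 X ∘ₗ p𝔪) ∘ₗ (LieAlgebra.ad ℝ 𝔤 Y ∘ₗ p𝔨) := by
    ext v
    simp only [LinearMap.add_apply, LinearMap.comp_apply, LieAlgebra.ad_apply, hY]
    rw [← lie_add, ← lie_add, add_comm (p𝔪 v), hpsum]
  have hcyc : LinearMap.trace ℝ 𝔤
      ((LieAlgebra.ad ℝ 𝔤 X ∘ₗ p𝔪) ∘ₗ (LieAlgebra.ad ℝ 𝔤 Y ∘ₗ p𝔨))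
      = LinearMap.trace ℝ 𝔤
        ((LieAlgebra.ad ℝ 𝔤 Y ∘ₗ p𝔨 ∘ₗ LieAlgebra.ad ℝ 𝔤 X) ∘ₗ p𝔪) := by
    rw [LinearMap.trace_comp_comm']
    rfl
  rw [killingForm_apply_apply, hsplit, map_add, hcyc, trace_comp_proj Q p𝔪 Z hp,
    trace_comp_proj Q p𝔪 Z hp, ← Finset.sum_add_distrib, Finset.mul_sum,
    ← Finset.sum_add_distrib, ← Finset.sum_neg_distrib]
  refine Finset.sum_congr rfl fun i _ => ?_
  simp only [LinearMap.comp_apply, LieAlgebra.ad_apply]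
  have e1 := hQinv X ⁅Y, Z i⁆ (Z i)
  have e2 := hQinv Y (p𝔨 ⁅X, Z i⁆) (Z i)
  have hQp' : ∀ U V, Q (p𝔪 U) (p𝔨 V) = 0 := fun U V => (hQsymm _ _).trans (hQp V U)
  have e3 : Q ⁅Y, Z i⁆ ⁅X, Z i⁆
      = Q (p𝔪 ⁅X, Z i⁆) (p𝔪 ⁅Y, Z i⁆) + Q (p𝔨 ⁅X, Z i⁆) (p𝔨 ⁅Y, Z i⁆) := by
    rw [hQsymm]
    conv_lhs => rw [← hpsum ⁅X, Z i⁆, ← hpsum ⁅Y, Z i⁆]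
    simp only [map_add, LinearMap.add_apply, hQp, hQp']
    ring
  have e4 : Q (p𝔨 ⁅X, Z i⁆) ⁅Y, Z i⁆ = Q (p𝔨 ⁅X, Z i⁆) (p𝔨 ⁅Y, Z i⁆) := by
    conv_lhs => rw [← hpsum ⁅Y, Z i⁆]
    rw [map_add, hQp, add_zero]
  linarith

/-- The `Z`-summand of `Ric^α(X,Y)`; the condition `hYp`, orthogonality of `Y` to `𝔨`,
holds for every `Y` in `𝔪`. -/
theorem curv_pairing {𝔤 : Type*} [LieRing 𝔤] [LieAlgebra ℝ 𝔤]
    (Q : 𝔤 →ₗ[ℝ] 𝔤 →ₗ[ℝ] ℝ)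
    (hQsymm : ∀ X Y : 𝔤, Q X Y = Q Y X)
    (hQinv : ∀ X Y Z : 𝔤, Q ⁅X, Y⁆ Z + Q Y ⁅X, Z⁆ = 0)
    (p𝔨 p𝔪 : 𝔤 →ₗ[ℝ] 𝔤) (hpsum : ∀ X : 𝔤, p𝔨 X + p𝔪 X = X)
    (hQp : ∀ U V, Q (p𝔨 U) (p𝔪 V) = 0)
    (α : ℝ) (X Y Z : 𝔤) (hYp : ∀ U, Q (p𝔨 U) Y = 0) :
    Q (CurvR 𝔤 p𝔨 p𝔪 α X Z Z) Y
      = ((1 - α ^ 2) / 4) * Q (p𝔪 ⁅X, Z⁆) (p𝔪 ⁅Y, Z⁆) + Q (p𝔨 ⁅X, Z⁆) (p𝔨 ⁅Y, Z⁆) := by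
  have hQp' : ∀ U V, Q (p𝔪 U) (p𝔨 V) = 0 := fun U V => (hQsymm _ _).trans (hQp V U)
  have hpm : ∀ U, Q (p𝔪 U) Y = Q U Y := fun U => by
    conv_rhs => rw [← hpsum U, map_add, LinearMap.add_apply, hYp, zero_add]
  -- Skewness of `ad Z`, written with the bracket order of the curvature.
  have hskew : ∀ W, Q ⁅W, Z⁆ Y = Q W ⁅Z, Y⁆ := fun W => by
    have := hQinv Z W Y
    rw [← lie_skew W Z, map_neg, LinearMap.neg_apply]
    linarith
  have hZY : ⁅Z, Y⁆ = -(p𝔨 ⁅Y, Z⁆ + p𝔪 ⁅Y, Z⁆) := by rw [hpsum, lie_skew]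
  have h1 : Q ⁅p𝔪 ⁅X, Z⁆, Z⁆ Y = -Q (p𝔪 ⁅X, Z⁆) (p𝔪 ⁅Y, Z⁆) := by
    rw [hskew, hZY, map_neg, map_add, hQp', zero_add]
  have h2 : Q ⁅p𝔨 ⁅X, Z⁆, Z⁆ Y = -Q (p𝔨 ⁅X, Z⁆) (p𝔨 ⁅Y, Z⁆) := by
    rw [hskew, hZY, map_neg, map_add, hQp, add_zero]
  have h3 : Q ⁅Z, p𝔪 ⁅X, Z⁆⁆ Y = Q (p𝔪 ⁅X, Z⁆) (p𝔪 ⁅Y, Z⁆) := by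
    rw [← lie_skew, map_neg, LinearMap.neg_apply, h1, neg_neg]
  simp only [CurvR, LamR, lie_self, map_zero, smul_zero, lie_zero, lie_smul, map_smul, map_sub,
    LinearMap.sub_apply, LinearMap.smul_apply, LinearMap.zero_apply, hpm, h1, h2, h3, smul_eq_mul]
  ring

/-- On a naturally reductive space, the Ricci tensor of `∇^α` is
`Ric^α(X,Y) = ((1−α²)/4)·Σᵢ Q([X,Zᵢ]_𝔪,[Y,Zᵢ]_𝔪) + A(X,Y)
= ((1−α²)/4)·B(X,Y) + ((1+α²)/2)·A(X,Y)`, and the scalar curvature is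
`Scal^α = ((1−α²)/4)·Σᵢⱼ ‖[Zᵢ,Zⱼ]_𝔪‖² + Σᵢ A(Zᵢ,Zᵢ)`. -/
theorem stmt_10 (𝔤 : Type*) [LieRing 𝔤] [LieAlgebra ℝ 𝔤] [FiniteDimensional ℝ 𝔤]
    (Q : 𝔤 →ₗ[ℝ] 𝔤 →ₗ[ℝ] ℝ)
    (hQsymm : ∀ X Y : 𝔤, Q X Y = Q Y X)
    (hQnondeg : LinearMap.BilinForm.Nondegenerate Q)
    (hQinv : ∀ X Y Z : 𝔤, Q ⁅X, Y⁆ Z + Q Y ⁅X, Z⁆ = 0)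
    (𝔨 𝔪 : Submodule ℝ 𝔤)
    (h𝔨 : ∀ X ∈ 𝔨, ∀ Y ∈ 𝔨, ⁅X, Y⁆ ∈ 𝔨)
    (hcompl : IsCompl 𝔨 𝔪)
    (horth : ∀ X ∈ 𝔨, ∀ Y ∈ 𝔪, Q X Y = 0)
    (hQpos : ∀ X ∈ 𝔪, X ≠ 0 → 0 < Q X X)
    (h𝔨𝔪 : ∀ X ∈ 𝔨, ∀ Y ∈ 𝔪, ⁅X, Y⁆ ∈ 𝔪)
    (p𝔨 p𝔪 : 𝔤 →ₗ[ℝ] 𝔤)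
    (hp𝔨mem : ∀ X : 𝔤, p𝔨 X ∈ 𝔨) (hp𝔪mem : ∀ X : 𝔤, p𝔪 X ∈ 𝔪)
    (hpsum : ∀ X : 𝔤, p𝔨 X + p𝔪 X = X)
    (n : ℕ) (Z : Fin n → 𝔤)
    (hZmem : ∀ i, Z i ∈ 𝔪)
    (hZon : ∀ i j, Q (Z i) (Z j) = if i = j then 1 else 0)
    (hZspan : Submodule.span ℝ (Set.range Z) = 𝔪)
    (α : ℝ) :
    (∀ X ∈ 𝔪, ∀ Y ∈ 𝔪,
        RicR 𝔤 Q p𝔨 p𝔪 α Z X Y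
          = ((1 - α ^ 2) / 4) * (∑ i, Q (p𝔪 ⁅X, Z i⁆) (p𝔪 ⁅Y, Z i⁆))
            + ∑ i, Q (p𝔨 ⁅X, Z i⁆) (p𝔨 ⁅Y, Z i⁆))
    ∧ (∀ X ∈ 𝔪, ∀ Y ∈ 𝔪,
        RicR 𝔤 Q p𝔨 p𝔪 α Z X Y
          = ((1 - α ^ 2) / 4) * (- killingForm ℝ 𝔤 X Y)
            + ((1 + α ^ 2) / 2) * ∑ i, Q (p𝔨 ⁅X, Z i⁆) (p𝔨 ⁅Y, Z i⁆))
    ∧ (∑ i, RicR 𝔤 Q p𝔨 p𝔪 α Z (Z i) (Z i)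
          = ((1 - α ^ 2) / 4) * (∑ i, ∑ j, Q (p𝔪 ⁅Z i, Z j⁆) (p𝔪 ⁅Z i, Z j⁆))
            + ∑ i, ∑ j, Q (p𝔨 ⁅Z i, Z j⁆) (p𝔨 ⁅Z i, Z j⁆)) := by
  have hQp : ∀ U V, Q (p𝔨 U) (p𝔪 V) = 0 := fun U V => horth _ (hp𝔨mem U) _ (hp𝔪mem V)
  have hp := proj_eq_sum Q 𝔨 𝔪 horth p𝔨 p𝔪 hp𝔨mem hp𝔪mem hpsum Z hZmem hZon hZspan
  have hfix : ∀ W ∈ 𝔪, p𝔪 W = W := fun W hW => by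
    have hk : p𝔨 W ∈ 𝔪 := by
      rw [eq_sub_of_add_eq (hpsum W)]
      exact 𝔪.sub_mem hW (hp𝔪mem W)
    have h0 : p𝔨 W = 0 := Submodule.disjoint_def.1 hcompl.disjoint _ (hp𝔨mem W) hk
    simpa [h0] using hpsum W
  have hRic : ∀ X ∈ 𝔪, ∀ Y ∈ 𝔪,
      RicR 𝔤 Q p𝔨 p𝔪 α Z X Y
        = ((1 - α ^ 2) / 4) * (∑ i, Q (p𝔪 ⁅X, Z i⁆) (p𝔪 ⁅Y, Z i⁆))
          + ∑ i, Q (p𝔨 ⁅X, Z i⁆) (p𝔨 ⁅Y, Z i⁆) := fun X _ Y hY => by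
    rw [RicR, Finset.mul_sum, ← Finset.sum_add_distrib]
    exact Finset.sum_congr rfl fun i _ => curv_pairing Q hQsymm hQinv p𝔨 p𝔪 hpsum hQp α X Y (Z i)
      fun U => horth _ (hp𝔨mem U) _ hY
  refine ⟨hRic, fun X hX Y hY => ?_, ?_⟩
  · have hYk : ∀ U, p𝔪 ⁅Y, p𝔨 U⁆ = ⁅Y, p𝔨 U⁆ := fun U => by
      refine hfix _ ?_
      rw [← lie_skew]
      exact 𝔪.neg_mem (h𝔨𝔪 _ (hp𝔨mem U) _ hY)
    rw [hRic X hX Y hY, killingForm_eq_sum Q hQsymm hQinv p𝔨 p𝔪 hpsum hQp Z hp X Y hYk]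
    ring
  · rw [Finset.mul_sum, ← Finset.sum_add_distrib]
    exact Finset.sum_congr rfl fun i _ => hRic _ (hZmem i) _ (hZmem i)
end

section
/- The torsion of ∇^α is T^α(X,Y) = −α[X,Y]_𝔪, and the symmetric tensor S^α(X,Y) := Σ_{i=1}^{n} Q(T^α(Zᵢ,X), T^α(Zᵢ,Y)) satisfies S^α(X,Y) = α²·( B(X,Y) − 2·A(X,Y) ) for all X,Y ∈ 𝔪, where B := −κ restricted to 𝔪; consequently Ric^α(X,Y) = Ric^0(X,Y) − (1/4)·S^α(X,Y) for all X,Y ∈ 𝔪, where Ric^0 is the Ricci tensor of the Levi-Civita connection (α = 0 of the Ricci family... i.e. the Riemannian Ricci tensor of the naturally reductive metric). -/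
/-!
Put `M(X,Y) = ∑ᵢ Q([X,Zᵢ]_𝔪, [Y,Zᵢ]_𝔪)`. All three tensors are expressed through `M` and
`A(X,Y) = ∑ᵢ Q([X,Zᵢ]_𝔨, [Y,Zᵢ]_𝔨)`.

* Since `T^α(X,Y) = −α[X,Y]_𝔪`, one has `S^α = α² M`.
* For every endomorphism `f`, `tr(p𝔪 ∘ f) = ∑ᵢ Q(f Zᵢ, Zᵢ)` (`trace_proj_comp`). Splitting
  `κ(X,Y) = tr(p𝔪 ad X ad Y) + tr(p𝔨 ad X ad Y)`, invariance turns the first term into `−(A + M)`.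
  As `ad Y` maps `𝔨` into `𝔪`, cyclicity of the trace rewrites the second as
  `tr(p𝔪 ad Y p𝔨 ad X) = −A`. Hence `κ = −2A − M` on `𝔪` (`killingForm_eq_sum`),
  so `S^α = α²(B − 2A)`.
* With `c = (1−α)/2`, invariance shows that `Ric^α` equals `(c − c²) M = ((1 − α²)/4) M` plus a term
  independent of `α` (`RicR_eq_sum`), so `Ric^α − Ric^0 = −(α²/4) M = −(1/4) S^α`.
-/

open scoped BigOperators

/-- The torsion `T^α(X,Y) := Λ^α(X)Y − Λ^α(Y)X − [X,Y]_𝔪`. -/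
noncomputable def TorR (𝔤 : Type*) [LieRing 𝔤] [LieAlgebra ℝ 𝔤]
    (p𝔪 : 𝔤 →ₗ[ℝ] 𝔤) (α : ℝ) (X Y : 𝔤) : 𝔤 :=
  LamR 𝔤 p𝔪 α X Y - LamR 𝔤 p𝔪 α Y X - p𝔪 ⁅X, Y⁆

/-- The symmetric tensor `S^α(X,Y) := Σᵢ Q(T^α(Zᵢ,X), T^α(Zᵢ,Y))`. -/
noncomputable def SR (𝔤 : Type*) [LieRing 𝔤] [LieAlgebra ℝ 𝔤]
    (Q : 𝔤 →ₗ[ℝ] 𝔤 →ₗ[ℝ] ℝ) (p𝔪 : 𝔤 →ₗ[ℝ] 𝔤) (α : ℝ)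
    {n : ℕ} (Z : Fin n → 𝔤) (X Y : 𝔤) : ℝ :=
  ∑ i, Q (TorR 𝔤 p𝔪 α (Z i) X) (TorR 𝔤 p𝔪 α (Z i) Y)

section ReductiveSplitting

variable {𝔤 : Type*} [LieRing 𝔤] [LieAlgebra ℝ 𝔤]

lemma TorR_eq_smul (p𝔪 : 𝔤 →ₗ[ℝ] 𝔤) (α : ℝ) (X Y : 𝔤) :
    TorR 𝔤 p𝔪 α X Y = (-α) • p𝔪 ⁅X, Y⁆ := by
  unfold TorR LamR
  rw [← lie_skew X Y, map_neg]
  module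

lemma SR_eq_sum (Q : 𝔤 →ₗ[ℝ] 𝔤 →ₗ[ℝ] ℝ) (p𝔪 : 𝔤 →ₗ[ℝ] 𝔤) (α : ℝ)
    {n : ℕ} (Z : Fin n → 𝔤) (X Y : 𝔤) :
    SR 𝔤 Q p𝔪 α Z X Y = α ^ 2 * ∑ i, Q (p𝔪 ⁅X, Z i⁆) (p𝔪 ⁅Y, Z i⁆) := by
  unfold SR
  rw [Finset.mul_sum]
  refine Finset.sum_congr rfl fun i _ => ?_
  rw [TorR_eq_smul, TorR_eq_smul, ← lie_skew X, ← lie_skew Y]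
  simp only [map_neg, map_smul, LinearMap.smul_apply, LinearMap.neg_apply, smul_eq_mul]
  ring

/-- The orthogonal projection onto `𝔪` can be dropped when pairing with an element of `𝔪`. -/
lemma Q_proj_left {Q : 𝔤 →ₗ[ℝ] 𝔤 →ₗ[ℝ] ℝ} {𝔨 𝔪 : Submodule ℝ 𝔤}
    (horth : ∀ X ∈ 𝔨, ∀ Y ∈ 𝔪, Q X Y = 0) {p𝔨 p𝔪 : 𝔤 →ₗ[ℝ] 𝔤}
    (hp𝔨mem : ∀ X : 𝔤, p𝔨 X ∈ 𝔨) (hpsum : ∀ X : 𝔤, p𝔨 X + p𝔪 X = X)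
    (W : 𝔤) {Y : 𝔤} (hY : Y ∈ 𝔪) : Q (p𝔪 W) Y = Q W Y := by
  conv_rhs => rw [← hpsum W]
  rw [map_add, LinearMap.add_apply, horth _ (hp𝔨mem W) _ hY, zero_add]

/-- `tr(p𝔪 ∘ f) = ∑ᵢ Q(f Zᵢ, Zᵢ)`, because `p𝔪 W = ∑ᵢ Q(W, Zᵢ) Zᵢ`. -/
lemma trace_proj_comp [FiniteDimensional ℝ 𝔤] {Q : 𝔤 →ₗ[ℝ] 𝔤 →ₗ[ℝ] ℝ}
    {𝔨 𝔪 : Submodule ℝ 𝔤}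
    (horth : ∀ X ∈ 𝔨, ∀ Y ∈ 𝔪, Q X Y = 0) {p𝔨 p𝔪 : 𝔤 →ₗ[ℝ] 𝔤}
    (hp𝔨mem : ∀ X : 𝔤, p𝔨 X ∈ 𝔨) (hp𝔪mem : ∀ X : 𝔤, p𝔪 X ∈ 𝔪)
    (hpsum : ∀ X : 𝔤, p𝔨 X + p𝔪 X = X)
    {n : ℕ} {Z : Fin n → 𝔤} (hZmem : ∀ i, Z i ∈ 𝔪)
    (hZon : ∀ i j, Q (Z i) (Z j) = if i = j then 1 else 0)
    (hZspan : Submodule.span ℝ (Set.range Z) = 𝔪) (f : 𝔤 →ₗ[ℝ] 𝔤) :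
    LinearMap.trace ℝ 𝔤 (p𝔪 ∘ₗ f) = ∑ i, Q (f (Z i)) (Z i) := by
  have hexp : ∀ W, p𝔪 W = ∑ i, Q W (Z i) • Z i := by
    intro W
    have hW : p𝔪 W ∈ Submodule.span ℝ (Set.range Z) := hZspan ▸ hp𝔪mem W
    obtain ⟨c, hc⟩ := (Submodule.mem_span_range_iff_exists_fun ℝ).1 hW
    have hcoeff : ∀ j, Q W (Z j) = c j := by
      intro j
      rw [← Q_proj_left horth hp𝔨mem hpsum W (hZmem j), ← hc]
      simp [hZon]
    simp only [hcoeff, hc]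
  have hdecomp : p𝔪 ∘ₗ f = ∑ i, ((Q.flip (Z i)) ∘ₗ f).smulRight (Z i) := by
    ext W
    simp [hexp]
  rw [hdecomp, map_sum]
  simp

/-- When `Y ∈ 𝔪`, the Killing form satisfies `κ(X,Y) = −2A(X,Y) − M(X,Y)`, where `A` and
`M` are the sums built from the `𝔨`- and `𝔪`-components of the brackets with the `Zᵢ`. -/
lemma killingForm_eq_sum_s11 [FiniteDimensional ℝ 𝔤] {Q : 𝔤 →ₗ[ℝ] 𝔤 →ₗ[ℝ] ℝ}
    (hQsymm : ∀ X Y : 𝔤, Q X Y = Q Y X)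
    (hQinv : ∀ X Y Z : 𝔤, Q ⁅X, Y⁆ Z + Q Y ⁅X, Z⁆ = 0)
    {𝔨 𝔪 : Submodule ℝ 𝔤} (hcompl : IsCompl 𝔨 𝔪)
    (horth : ∀ X ∈ 𝔨, ∀ Y ∈ 𝔪, Q X Y = 0)
    (h𝔨𝔪 : ∀ X ∈ 𝔨, ∀ Y ∈ 𝔪, ⁅X, Y⁆ ∈ 𝔪) {p𝔨 p𝔪 : 𝔤 →ₗ[ℝ] 𝔤}
    (hp𝔨mem : ∀ X : 𝔤, p𝔨 X ∈ 𝔨) (hp𝔪mem : ∀ X : 𝔤, p𝔪 X ∈ 𝔪)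
    (hpsum : ∀ X : 𝔤, p𝔨 X + p𝔪 X = X)
    {n : ℕ} {Z : Fin n → 𝔤} (hZmem : ∀ i, Z i ∈ 𝔪)
    (hZon : ∀ i j, Q (Z i) (Z j) = if i = j then 1 else 0)
    (hZspan : Submodule.span ℝ (Set.range Z) = 𝔪) (X : 𝔤) {Y : 𝔤} (hY : Y ∈ 𝔪) :
    killingForm ℝ 𝔤 X Y = -2 * ∑ i, Q (p𝔨 ⁅X, Z i⁆) (p𝔨 ⁅Y, Z i⁆)
      - ∑ i, Q (p𝔪 ⁅X, Z i⁆) (p𝔪 ⁅Y, Z i⁆) := by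
  have hp𝔪id : ∀ W ∈ 𝔪, p𝔪 W = W := by
    intro W hW
    have hk : p𝔨 W ∈ 𝔪 := by
      rw [eq_sub_of_add_eq (hpsum W)]
      exact 𝔪.sub_mem hW (hp𝔪mem W)
    have h0 : p𝔨 W = 0 := Submodule.disjoint_def.1 hcompl.disjoint _ (hp𝔨mem W) hk
    simpa [h0] using hpsum W
  have horth' : ∀ U W, Q (p𝔨 U) (p𝔪 W) = 0 := fun U W => horth _ (hp𝔨mem U) _ (hp𝔪mem W)
  have hQk : ∀ U W, Q (p𝔨 U) W = Q (p𝔨 U) (p𝔨 W) := by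
    intro U W
    conv_lhs => rw [← hpsum W]
    rw [map_add, horth', add_zero]
  have hQsplit : ∀ U W, Q U W = Q (p𝔨 U) (p𝔨 W) + Q (p𝔪 U) (p𝔪 W) := by
    intro U W
    conv_lhs => rw [← hpsum U, ← hpsum W]
    simp only [map_add, LinearMap.add_apply, horth', hQsymm (p𝔪 U) (p𝔨 W)]
    ring
  have htr := trace_proj_comp horth hp𝔨mem hp𝔪mem hpsum hZmem hZon hZspan
  let adX : 𝔤 →ₗ[ℝ] 𝔤 := LieAlgebra.ad ℝ 𝔤 X
  let adY : 𝔤 →ₗ[ℝ] 𝔤 := LieAlgebra.ad ℝ 𝔤 Y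
  have hsplit : killingForm ℝ 𝔤 X Y
      = LinearMap.trace ℝ 𝔤 (p𝔨 ∘ₗ (adX ∘ₗ adY)) + LinearMap.trace ℝ 𝔤 (p𝔪 ∘ₗ (adX ∘ₗ adY)) := by
    rw [← map_add, ← LinearMap.add_comp]
    have hid : p𝔨 + p𝔪 = LinearMap.id := LinearMap.ext hpsum
    rw [hid, LinearMap.id_comp]
    rfl
  have hadY : adY ∘ₗ p𝔨 = p𝔪 ∘ₗ (adY ∘ₗ p𝔨) := by
    ext W
    refine (hp𝔪id _ ?_).symm
    change ⁅Y, p𝔨 W⁆ ∈ 𝔪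
    rw [← lie_skew]
    exact 𝔪.neg_mem (h𝔨𝔪 _ (hp𝔨mem W) _ hY)
  -- `ad Y` maps `𝔨` into `𝔪`, so a factor `p𝔪` may be inserted between two cyclic permutations.
  have hcyc : LinearMap.trace ℝ 𝔤 (p𝔨 ∘ₗ (adX ∘ₗ adY))
      = LinearMap.trace ℝ 𝔤 (p𝔪 ∘ₗ (adY ∘ₗ p𝔨 ∘ₗ adX)) := by
    rw [LinearMap.trace_comp_comm', LinearMap.comp_assoc, hadY, LinearMap.trace_comp_comm']
    rfl
  have h1 : ∑ i, Q ((adY ∘ₗ p𝔨 ∘ₗ adX) (Z i)) (Z i)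
      = -∑ i, Q (p𝔨 ⁅X, Z i⁆) (p𝔨 ⁅Y, Z i⁆) := by
    rw [← Finset.sum_neg_distrib]
    refine Finset.sum_congr rfl fun i _ => ?_
    change Q ⁅Y, p𝔨 ⁅X, Z i⁆⁆ (Z i) = _
    rw [eq_neg_of_add_eq_zero_left (hQinv _ _ _), hQk]
  have h2 : ∑ i, Q ((adX ∘ₗ adY) (Z i)) (Z i)
      = -(∑ i, Q (p𝔨 ⁅X, Z i⁆) (p𝔨 ⁅Y, Z i⁆) + ∑ i, Q (p𝔪 ⁅X, Z i⁆) (p𝔪 ⁅Y, Z i⁆)) := by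
    rw [← Finset.sum_add_distrib, ← Finset.sum_neg_distrib]
    refine Finset.sum_congr rfl fun i _ => ?_
    change Q ⁅X, ⁅Y, Z i⁆⁆ (Z i) = _
    rw [eq_neg_of_add_eq_zero_left (hQinv _ _ _), hQsymm, ← hQsplit]
  rw [hsplit, hcyc, htr, htr, h1, h2]
  ring

/-- The dependence of `Ric^α` on `α`: with `c = (1−α)/2`, the coefficient of `M` is
`c − c² = (1−α²)/4`, and the remaining `𝔨`-term does not involve `α`. -/
lemma RicR_eq_sum {Q : 𝔤 →ₗ[ℝ] 𝔤 →ₗ[ℝ] ℝ}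
    (hQsymm : ∀ X Y : 𝔤, Q X Y = Q Y X)
    (hQinv : ∀ X Y Z : 𝔤, Q ⁅X, Y⁆ Z + Q Y ⁅X, Z⁆ = 0)
    {𝔨 𝔪 : Submodule ℝ 𝔤} (horth : ∀ X ∈ 𝔨, ∀ Y ∈ 𝔪, Q X Y = 0) {p𝔨 p𝔪 : 𝔤 →ₗ[ℝ] 𝔤}
    (hp𝔨mem : ∀ X : 𝔤, p𝔨 X ∈ 𝔨) (hp𝔪mem : ∀ X : 𝔤, p𝔪 X ∈ 𝔪)
    (hpsum : ∀ X : 𝔤, p𝔨 X + p𝔪 X = X)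
    {n : ℕ} (Z : Fin n → 𝔤) (α : ℝ) (X : 𝔤) {Y : 𝔤} (hY : Y ∈ 𝔪) :
    RicR 𝔤 Q p𝔨 p𝔪 α Z X Y
      = (1 - α ^ 2) / 4 * ∑ i, Q (p𝔪 ⁅X, Z i⁆) (p𝔪 ⁅Y, Z i⁆)
        - ∑ i, Q ⁅p𝔨 ⁅X, Z i⁆, Z i⁆ Y := by
  unfold RicR
  rw [Finset.mul_sum, ← Finset.sum_sub_distrib]
  refine Finset.sum_congr rfl fun i _ => ?_
  have hbr : Q ⁅Z i, p𝔪 ⁅X, Z i⁆⁆ Y = Q (p𝔪 ⁅X, Z i⁆) (p𝔪 ⁅Y, Z i⁆) := by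
    rw [eq_neg_of_add_eq_zero_left (hQinv _ _ _), ← lie_skew Y (Z i), map_neg, map_neg]
    rw [hQsymm _ (p𝔪 _), Q_proj_left horth hp𝔨mem hpsum _ (hp𝔪mem _), hQsymm]
  have hbr' : Q ⁅p𝔪 ⁅X, Z i⁆, Z i⁆ Y = -Q (p𝔪 ⁅X, Z i⁆) (p𝔪 ⁅Y, Z i⁆) := by
    rw [← lie_skew, map_neg, LinearMap.neg_apply, hbr]
  unfold CurvR LamR
  simp only [lie_self, map_zero, smul_zero, lie_zero, lie_smul, map_smul, map_sub,
    LinearMap.sub_apply, LinearMap.smul_apply, smul_eq_mul, LinearMap.zero_apply,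
    Q_proj_left horth hp𝔨mem hpsum _ hY, hbr, hbr']
  ring

end ReductiveSplitting

/-- The torsion of `∇^α` is `T^α(X,Y) = −α[X,Y]_𝔪`, the symmetric tensor
`S^α` satisfies `S^α(X,Y) = α²(B(X,Y) − 2A(X,Y))`, and consequently
`Ric^α(X,Y) = Ric^0(X,Y) − (1/4)S^α(X,Y)` on `𝔪`. -/
theorem stmt_11 (𝔤 : Type*) [LieRing 𝔤] [LieAlgebra ℝ 𝔤] [FiniteDimensional ℝ 𝔤]
    (Q : 𝔤 →ₗ[ℝ] 𝔤 →ₗ[ℝ] ℝ)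
    (hQsymm : ∀ X Y : 𝔤, Q X Y = Q Y X)
    (hQnondeg : LinearMap.BilinForm.Nondegenerate Q)
    (hQinv : ∀ X Y Z : 𝔤, Q ⁅X, Y⁆ Z + Q Y ⁅X, Z⁆ = 0)
    (𝔨 𝔪 : Submodule ℝ 𝔤)
    (h𝔨 : ∀ X ∈ 𝔨, ∀ Y ∈ 𝔨, ⁅X, Y⁆ ∈ 𝔨)
    (hcompl : IsCompl 𝔨 𝔪)
    (horth : ∀ X ∈ 𝔨, ∀ Y ∈ 𝔪, Q X Y = 0)
    (hQpos : ∀ X ∈ 𝔪, X ≠ 0 → 0 < Q X X)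
    (h𝔨𝔪 : ∀ X ∈ 𝔨, ∀ Y ∈ 𝔪, ⁅X, Y⁆ ∈ 𝔪)
    (p𝔨 p𝔪 : 𝔤 →ₗ[ℝ] 𝔤)
    (hp𝔨mem : ∀ X : 𝔤, p𝔨 X ∈ 𝔨) (hp𝔪mem : ∀ X : 𝔤, p𝔪 X ∈ 𝔪)
    (hpsum : ∀ X : 𝔤, p𝔨 X + p𝔪 X = X)
    (n : ℕ) (Z : Fin n → 𝔤)
    (hZmem : ∀ i, Z i ∈ 𝔪)
    (hZon : ∀ i j, Q (Z i) (Z j) = if i = j then 1 else 0)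
    (hZspan : Submodule.span ℝ (Set.range Z) = 𝔪)
    (α : ℝ) :
    (∀ X ∈ 𝔪, ∀ Y ∈ 𝔪, TorR 𝔤 p𝔪 α X Y = (-α) • p𝔪 ⁅X, Y⁆)
    ∧ (∀ X ∈ 𝔪, ∀ Y ∈ 𝔪,
        SR 𝔤 Q p𝔪 α Z X Y
          = α ^ 2 * ((- killingForm ℝ 𝔤 X Y)
              - 2 * ∑ i, Q (p𝔨 ⁅X, Z i⁆) (p𝔨 ⁅Y, Z i⁆)))
    ∧ (∀ X ∈ 𝔪, ∀ Y ∈ 𝔪,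
        RicR 𝔤 Q p𝔨 p𝔪 α Z X Y
          = RicR 𝔤 Q p𝔨 p𝔪 0 Z X Y - (1 / 4) * SR 𝔤 Q p𝔪 α Z X Y) := by
  have hκ := fun X Y (hY : Y ∈ 𝔪) => killingForm_eq_sum_s11 hQsymm hQinv hcompl horth h𝔨𝔪
    hp𝔨mem hp𝔪mem hpsum hZmem hZon hZspan X hY
  have hRic := fun (β : ℝ) X Y (hY : Y ∈ 𝔪) =>
    RicR_eq_sum hQsymm hQinv horth hp𝔨mem hp𝔪mem hpsum Z β X hY
  refine ⟨fun X _ Y _ => TorR_eq_smul p𝔪 α X Y, fun X _ Y hY => ?_, fun X _ Y hY => ?_⟩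
  · rw [SR_eq_sum, hκ X Y hY]
    ring
  · rw [hRic α X Y hY, hRic 0 X Y hY, SR_eq_sum]
    ring
end

section
/- For every α ∈ ℝ and all X,Y ∈ 𝔤: Ric^α(X,Y) = ((1−α²)/4)·B(X,Y). Consequently Scal^α := Σᵢ Ric^α(Zᵢ,Zᵢ) = n(1−α²)/4, and the torsion T^α(X,Y) = −α[X,Y] has normalized length ‖T^α‖² := (1/6)·Σ_{i,j} B(T^α(Zᵢ,Zⱼ), T^α(Zᵢ,Zⱼ)) = n·α²/6; i.e. 𝔤 with the metric B is ∇^α-Einstein for every α ∈ ℝ. -/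
/-!
Write `c = (1 - α) / 2`. Since `[Zᵢ, Zᵢ] = 0`, the curvature collapses to
`R(X, Zᵢ)Zᵢ = (c - c²) [Zᵢ, [X, Zᵢ]]`, and `c - c² = (1 - α²) / 4`. By `ad`-invariance of the
Killing form, `B([Zᵢ, [X, Zᵢ]], Y) = B([X, Zᵢ], [Y, Zᵢ])`, and summing over the orthonormal basis
gives `-tr (ad X ∘ ad Y) = B(X, Y)` (`sum_negKilling_lie_lie`), which is the Casimir identity
`∑ᵢ (ad Zᵢ)² = -id` in the adjoint representation. The same identity at `X = Y = Zᵢ`, summed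
over `i`, gives the length of the torsion.
-/

open scoped BigOperators

/-- The Nomizu map `Λ^α(X) := ((1−α)/2)·ad(X)`. -/
noncomputable def Lam (𝔤 : Type*) [LieRing 𝔤] [LieAlgebra ℝ 𝔤] (α : ℝ) (X Y : 𝔤) : 𝔤 :=
  ((1 - α) / 2) • ⁅X, Y⁆

/-- The torsion `T^α(X,Y) := Λ^α(X)Y − Λ^α(Y)X − [X,Y]`. -/
noncomputable def TorL (𝔤 : Type*) [LieRing 𝔤] [LieAlgebra ℝ 𝔤] (α : ℝ) (X Y : 𝔤) : 𝔤 :=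
  Lam 𝔤 α X Y - Lam 𝔤 α Y X - ⁅X, Y⁆

/-- The curvature `R^α(X,Y)Z := Λ^α(X)(Λ^α(Y)Z) − Λ^α(Y)(Λ^α(X)Z) − Λ^α([X,Y])Z`. -/
noncomputable def CurvL (𝔤 : Type*) [LieRing 𝔤] [LieAlgebra ℝ 𝔤] (α : ℝ) (X Y Z : 𝔤) : 𝔤 :=
  Lam 𝔤 α X (Lam 𝔤 α Y Z) - Lam 𝔤 α Y (Lam 𝔤 α X Z) - Lam 𝔤 α ⁅X, Y⁆ Z

/-- The negative of the Killing form, `B := −κ`. -/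
noncomputable def NegKilling (𝔤 : Type*) [LieRing 𝔤] [LieAlgebra ℝ 𝔤] (X Y : 𝔤) : ℝ :=
  - killingForm ℝ 𝔤 X Y

/-- The Ricci tensor `Ric^α(X,Y) := Σᵢ B(R^α(X,Zᵢ)Zᵢ, Y)`. -/
noncomputable def RicL (𝔤 : Type*) [LieRing 𝔤] [LieAlgebra ℝ 𝔤]
    (α : ℝ) {n : ℕ} (Z : Fin n → 𝔤) (X Y : 𝔤) : ℝ :=
  ∑ i, NegKilling 𝔤 (CurvL 𝔤 α X (Z i) (Z i)) Y

theorem linearIndependent_of_negKilling_orthonormal (𝔤 : Type*) [LieRing 𝔤] [LieAlgebra ℝ 𝔤]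
    {n : ℕ} (Z : Fin n → 𝔤)
    (hZon : ∀ i j, NegKilling 𝔤 (Z i) (Z j) = if i = j then 1 else 0) :
    LinearIndependent ℝ Z := by
  rw [Fintype.linearIndependent_iff]
  intro g hg j
  have h := congrArg (fun x => NegKilling 𝔤 x (Z j)) hg
  simp only [NegKilling, map_sum, map_smul, LinearMap.sum_apply, LinearMap.smul_apply,
    smul_eq_mul, map_zero, LinearMap.zero_apply, neg_zero, ← Finset.sum_neg_distrib,
    ← mul_neg] at h
  simp only [NegKilling] at hZon
  simpa [hZon] using h

/-- The trace of an endomorphism, computed in a `B`-orthonormal basis. -/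
theorem trace_eq_sum_negKilling (𝔤 : Type*) [LieRing 𝔤] [LieAlgebra ℝ 𝔤]
    {n : ℕ} (Z : Fin n → 𝔤)
    (hZon : ∀ i j, NegKilling 𝔤 (Z i) (Z j) = if i = j then 1 else 0)
    (hZspan : Submodule.span ℝ (Set.range Z) = ⊤) (f : 𝔤 →ₗ[ℝ] 𝔤) :
    LinearMap.trace ℝ 𝔤 f = ∑ i, NegKilling 𝔤 (f (Z i)) (Z i) := by
  let b : Module.Basis (Fin n) ℝ 𝔤 :=
    Module.Basis.mk (linearIndependent_of_negKilling_orthonormal 𝔤 Z hZon) hZspan.ge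
  have hb : ∀ i, b i = Z i := fun i => Module.Basis.mk_apply _ _ i
  -- Coordinates in an orthonormal basis are given by pairing with the basis vectors.
  have hrepr : ∀ x j, b.repr x j = NegKilling 𝔤 x (Z j) := by
    intro x j
    conv_rhs => rw [← b.sum_repr x]
    simp only [NegKilling] at hZon
    simp only [NegKilling, map_sum, map_smul, LinearMap.sum_apply, LinearMap.smul_apply,
      smul_eq_mul, ← Finset.sum_neg_distrib, ← mul_neg, hb, hZon]
    simp
  rw [LinearMap.trace_eq_matrix_trace ℝ b, Matrix.trace]
  refine Finset.sum_congr rfl fun i _ => ?_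
  rw [Matrix.diag_apply, LinearMap.toMatrix_apply, hrepr, hb]

/-- The form `B` is `ad`-invariant. -/
theorem negKilling_lie_left (𝔤 : Type*) [LieRing 𝔤] [LieAlgebra ℝ 𝔤] (X Y W : 𝔤) :
    NegKilling 𝔤 ⁅X, Y⁆ W = -NegKilling 𝔤 Y ⁅X, W⁆ := by
  have h := LieModule.traceForm_apply_lie_apply ℝ 𝔤 𝔤 Y X W
  rw [← lie_skew X Y]
  simp only [NegKilling, killingForm, map_neg, LinearMap.neg_apply, h]

/-- The adjoint Casimir identity: `∑ᵢ B([X, Zᵢ], [Y, Zᵢ]) = -tr (ad X ∘ ad Y) = B(X, Y)`. -/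
theorem sum_negKilling_lie_lie (𝔤 : Type*) [LieRing 𝔤] [LieAlgebra ℝ 𝔤]
    {n : ℕ} (Z : Fin n → 𝔤)
    (hZon : ∀ i j, NegKilling 𝔤 (Z i) (Z j) = if i = j then 1 else 0)
    (hZspan : Submodule.span ℝ (Set.range Z) = ⊤) (X Y : 𝔤) :
    ∑ i, NegKilling 𝔤 ⁅X, Z i⁆ ⁅Y, Z i⁆ = NegKilling 𝔤 X Y := by
  have h := trace_eq_sum_negKilling 𝔤 Z hZon hZspan (LieAlgebra.ad ℝ 𝔤 Y ∘ₗ LieAlgebra.ad ℝ 𝔤 X)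
  have hK : NegKilling 𝔤 X Y
      = -LinearMap.trace ℝ 𝔤 (LieAlgebra.ad ℝ 𝔤 Y ∘ₗ LieAlgebra.ad ℝ 𝔤 X) := by
    rw [NegKilling, LieModule.traceForm_comm, killingForm_apply_apply]
  rw [hK, h, ← Finset.sum_neg_distrib]
  refine Finset.sum_congr rfl fun i _ => ?_
  simp only [LinearMap.comp_apply, LieAlgebra.ad_apply, negKilling_lie_left 𝔤 Y, neg_neg]

theorem curvL_self (𝔤 : Type*) [LieRing 𝔤] [LieAlgebra ℝ 𝔤] (α : ℝ) (X W : 𝔤) :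
    CurvL 𝔤 α X W W = ((1 - α ^ 2) / 4) • ⁅W, ⁅X, W⁆⁆ := by
  simp only [CurvL, Lam, lie_self, smul_zero, lie_zero, lie_smul]
  rw [← lie_skew ⁅X, W⁆ W]
  module

theorem torL_eq (𝔤 : Type*) [LieRing 𝔤] [LieAlgebra ℝ 𝔤] (α : ℝ) (X Y : 𝔤) :
    TorL 𝔤 α X Y = (-α) • ⁅X, Y⁆ := by
  simp only [TorL, Lam]
  rw [← lie_skew Y X]
  module

theorem negKilling_smul_left (𝔤 : Type*) [LieRing 𝔤] [LieAlgebra ℝ 𝔤] (c : ℝ) (X Y : 𝔤) :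
    NegKilling 𝔤 (c • X) Y = c * NegKilling 𝔤 X Y := by
  simp [NegKilling]

theorem negKilling_smul_right (𝔤 : Type*) [LieRing 𝔤] [LieAlgebra ℝ 𝔤] (c : ℝ) (X Y : 𝔤) :
    NegKilling 𝔤 X (c • Y) = c * NegKilling 𝔤 X Y := by
  simp [NegKilling]

theorem ricL_eq (𝔤 : Type*) [LieRing 𝔤] [LieAlgebra ℝ 𝔤]
    {n : ℕ} (Z : Fin n → 𝔤)
    (hZon : ∀ i j, NegKilling 𝔤 (Z i) (Z j) = if i = j then 1 else 0)
    (hZspan : Submodule.span ℝ (Set.range Z) = ⊤) (α : ℝ) (X Y : 𝔤) :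
    RicL 𝔤 α Z X Y = ((1 - α ^ 2) / 4) * NegKilling 𝔤 X Y := by
  rw [RicL, ← sum_negKilling_lie_lie 𝔤 Z hZon hZspan X Y, Finset.mul_sum]
  refine Finset.sum_congr rfl fun i _ => ?_
  rw [curvL_self, negKilling_smul_left, negKilling_lie_left, ← lie_skew (Z i) Y]
  simp only [NegKilling, map_neg, neg_neg]

/-- For a Lie algebra `𝔤` of compact type (negative definite Killing form)
with `B := −κ` and a `B`-orthonormal basis `Z₁,…,Z_n`: `Ric^α(X,Y) = ((1−α²)/4)·B(X,Y)`
for all `X,Y`, hence `Scal^α = n(1−α²)/4`, and the torsion `T^α(X,Y) = −α[X,Y]` has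
normalized length `‖T^α‖² = n·α²/6`; i.e. `(𝔤, B)` is `∇^α`-Einstein for every `α`. -/
theorem stmt_13 (𝔤 : Type*) [LieRing 𝔤] [LieAlgebra ℝ 𝔤] [FiniteDimensional ℝ 𝔤]
    (hκ : ∀ X : 𝔤, X ≠ 0 → killingForm ℝ 𝔤 X X < 0)
    (n : ℕ) (Z : Fin n → 𝔤)
    (hZon : ∀ i j, NegKilling 𝔤 (Z i) (Z j) = if i = j then 1 else 0)
    (hZspan : Submodule.span ℝ (Set.range Z) = ⊤)
    (α : ℝ) :
    (∀ X Y : 𝔤, RicL 𝔤 α Z X Y = ((1 - α ^ 2) / 4) * NegKilling 𝔤 X Y)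
    ∧ (∑ i, RicL 𝔤 α Z (Z i) (Z i) = n * (1 - α ^ 2) / 4)
    ∧ (∀ X Y : 𝔤, TorL 𝔤 α X Y = (-α) • ⁅X, Y⁆)
    ∧ ((1 / 6 : ℝ) * ∑ i, ∑ j, NegKilling 𝔤 (TorL 𝔤 α (Z i) (Z j)) (TorL 𝔤 α (Z i) (Z j))
        = n * α ^ 2 / 6) := by
  refine ⟨ricL_eq 𝔤 Z hZon hZspan α, ?_, torL_eq 𝔤 α, ?_⟩
  · simp only [ricL_eq 𝔤 Z hZon hZspan, hZon, if_true, Finset.sum_const, Finset.card_univ,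
      Fintype.card_fin, nsmul_eq_mul]
    ring
  · simp only [torL_eq, negKilling_smul_left, negKilling_smul_right, ← Finset.mul_sum,
      sum_negKilling_lie_lie 𝔤 Z hZon hZspan, hZon, if_true, Finset.sum_const, Finset.card_univ,
      Fintype.card_fin, nsmul_eq_mul]
    ring
end

section
/- Let s ∈ ℝ with s ≠ 1 and t > 0, and suppose the projection of [𝔪₁,𝔪₁] to 𝔪₂ is not zero (i.e. there exist X,Y ∈ 𝔪₁ with [X,Y]_{𝔪₂} ≠ 0). Then the 3-tensor T^{s,t}(X,Y,Z) := g_t(T^{s,t}(X,Y), Z) on 𝔪 is totally skew-symmetric (alternating in all three arguments) if and only if t = 1/2. -/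
/-!
On `𝔪 = 𝔪₁ ⊕ 𝔪₂` the parameter `t` cancels from the torsion: checking the bracket types
one at a time gives `T(X, Y) = (s - 1) • [X, Y]_𝔪`, so
`g_t(T(X, Y), Z) = (1 - s) (κ([X, Y], Z₁) + 2t κ([X, Y], Z₂))`, where `Zᵢ` denotes the
`𝔪ᵢ`-component of `Z`. For `t = 1/2` this is `(1 - s) κ([X, Y], Z)`, which is alternating because
`κ` is invariant. Conversely, take `X, Y ∈ 𝔪₁` with `Z = [X, Y]_{𝔪₂} ≠ 0`. Skew-symmetry in the
last two arguments compares the weight `2t` of `𝔪₂` with the weight `1` of `𝔪₁`: invariance turns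
it into `(1 - s) · 2t · κ(Z, Z) = (1 - s) κ(Z, Z)`, and definiteness of `κ` together with `s ≠ 1`
forces `2t = 1`.
-/


open scoped BigOperators

/-- The metric `g_t(X,Y) := B(X_{𝔪₁},Y_{𝔪₁}) + 2t·B(X_{𝔪₂},Y_{𝔪₂})` on `𝔪 = 𝔪₁ ⊕ 𝔪₂`. -/
noncomputable def gMet (𝔤 : Type*) [LieRing 𝔤] [LieAlgebra ℝ 𝔤]
    (p₁ p₂ : 𝔤 →ₗ[ℝ] 𝔤) (t : ℝ) (X Y : 𝔤) : ℝ :=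
  NegKilling 𝔤 (p₁ X) (p₁ Y) + 2 * t * NegKilling 𝔤 (p₂ X) (p₂ Y)

/-- The torsion `T^{s,t}(X,Y) := Λ_{s,t}(X)Y − Λ_{s,t}(Y)X − [X,Y]_𝔪`, with
`[X,Y]_𝔪 = p₁[X,Y] + p₂[X,Y]`. -/
noncomputable def TorST (𝔤 : Type*) [LieRing 𝔤] [LieAlgebra ℝ 𝔤]
    (Λ : 𝔤 →ₗ[ℝ] 𝔤 →ₗ[ℝ] 𝔤) (p₁ p₂ : 𝔤 →ₗ[ℝ] 𝔤) (X Y : 𝔤) : 𝔤 :=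
  Λ X Y - Λ Y X - (p₁ ⁅X, Y⁆ + p₂ ⁅X, Y⁆)

/-- Let `s ≠ 1`, `t > 0`, and suppose the `𝔪₂`-projection of `[𝔪₁,𝔪₁]` is
nonzero.  Then the 3-tensor `T^{s,t}(X,Y,Z) := g_t(T^{s,t}(X,Y),Z)` on `𝔪 = 𝔪₁ ⊕ 𝔪₂` is
totally skew-symmetric if and only if `t = 1/2`. -/
theorem stmt_14 (𝔤 : Type*) [LieRing 𝔤] [LieAlgebra ℝ 𝔤] [FiniteDimensional ℝ 𝔤]
    (hκ : ∀ X : 𝔤, X ≠ 0 → killingForm ℝ 𝔤 X X < 0)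
    (𝔨 𝔪₁ 𝔪₂ : Submodule ℝ 𝔤)
    (h𝔪₁ : 𝔪₁ ≠ ⊥) (h𝔪₂ : 𝔪₂ ≠ ⊥)
    (p𝔨 p₁ p₂ : 𝔤 →ₗ[ℝ] 𝔤)
    (hp𝔨mem : ∀ X : 𝔤, p𝔨 X ∈ 𝔨) (hp₁mem : ∀ X : 𝔤, p₁ X ∈ 𝔪₁) (hp₂mem : ∀ X : 𝔤, p₂ X ∈ 𝔪₂)
    (hpsum : ∀ X : 𝔤, p𝔨 X + p₁ X + p₂ X = X)
    (hid𝔨 : ∀ X ∈ 𝔨, p𝔨 X = X) (hid₁ : ∀ X ∈ 𝔪₁, p₁ X = X) (hid₂ : ∀ X ∈ 𝔪₂, p₂ X = X)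
    (h𝔨p₁ : ∀ X ∈ 𝔨, p₁ X = 0) (h𝔨p₂ : ∀ X ∈ 𝔨, p₂ X = 0)
    (h₁p𝔨 : ∀ X ∈ 𝔪₁, p𝔨 X = 0) (h₁p₂ : ∀ X ∈ 𝔪₁, p₂ X = 0)
    (h₂p𝔨 : ∀ X ∈ 𝔪₂, p𝔨 X = 0) (h₂p₁ : ∀ X ∈ 𝔪₂, p₁ X = 0)
    (horth𝔨₁ : ∀ X ∈ 𝔨, ∀ Y ∈ 𝔪₁, killingForm ℝ 𝔤 X Y = 0)
    (horth𝔨₂ : ∀ X ∈ 𝔨, ∀ Y ∈ 𝔪₂, killingForm ℝ 𝔤 X Y = 0)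
    (horth₁₂ : ∀ X ∈ 𝔪₁, ∀ Y ∈ 𝔪₂, killingForm ℝ 𝔤 X Y = 0)
    (h𝔨𝔨 : ∀ X ∈ 𝔨, ∀ Y ∈ 𝔨, ⁅X, Y⁆ ∈ 𝔨)
    (hb𝔨₁ : ∀ X ∈ 𝔨, ∀ Y ∈ 𝔪₁, ⁅X, Y⁆ ∈ 𝔪₁)
    (hb𝔨₂ : ∀ X ∈ 𝔨, ∀ Y ∈ 𝔪₂, ⁅X, Y⁆ ∈ 𝔪₂)
    (hb₁₁ : ∀ X ∈ 𝔪₁, ∀ Y ∈ 𝔪₁, ⁅X, Y⁆ ∈ 𝔨 ⊔ 𝔪₂)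
    (hb₁₂ : ∀ X ∈ 𝔪₁, ∀ Y ∈ 𝔪₂, ⁅X, Y⁆ ∈ 𝔪₁)
    (hb₂₂ : ∀ X ∈ 𝔪₂, ∀ Y ∈ 𝔪₂, ⁅X, Y⁆ ∈ 𝔨)
    (s t : ℝ) (hs : s ≠ 1) (ht : 0 < t)
    (Λ : 𝔤 →ₗ[ℝ] 𝔤 →ₗ[ℝ] 𝔤)
    (hΛ11 : ∀ X ∈ 𝔪₁, ∀ Y ∈ 𝔪₁, Λ X Y = (s / 2) • p₂ ⁅X, Y⁆)
    (hΛ12 : ∀ X ∈ 𝔪₁, ∀ Y ∈ 𝔪₂, Λ X Y = (s * t) • ⁅X, Y⁆)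
    (hΛ21 : ∀ X ∈ 𝔪₂, ∀ Y ∈ 𝔪₁, Λ X Y = (s * (1 - t)) • ⁅X, Y⁆)
    (hΛ22 : ∀ X ∈ 𝔪₂, ∀ Y ∈ 𝔪₂, Λ X Y = 0)
    (hex : ∃ X ∈ 𝔪₁, ∃ Y ∈ 𝔪₁, p₂ ⁅X, Y⁆ ≠ 0) :
    (∀ X ∈ 𝔪₁ ⊔ 𝔪₂, ∀ Y ∈ 𝔪₁ ⊔ 𝔪₂, ∀ Z ∈ 𝔪₁ ⊔ 𝔪₂,
        gMet 𝔤 p₁ p₂ t (TorST 𝔤 Λ p₁ p₂ X Y) Z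
            = - gMet 𝔤 p₁ p₂ t (TorST 𝔤 Λ p₁ p₂ Y X) Z
      ∧ gMet 𝔤 p₁ p₂ t (TorST 𝔤 Λ p₁ p₂ X Y) Z
            = - gMet 𝔤 p₁ p₂ t (TorST 𝔤 Λ p₁ p₂ X Z) Y)
    ↔ t = 1 / 2 := by
  have inv : ∀ X Y Z : 𝔤, killingForm ℝ 𝔤 ⁅X, Y⁆ Z = - killingForm ℝ 𝔤 ⁅X, Z⁆ Y := by
    intro X Y Z
    have h := LieModule.traceForm_apply_lie_apply ℝ 𝔤 𝔤 Y X Z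
    rw [← lie_skew Y X, LinearMap.BilinForm.neg_left] at h
    rw [LieModule.traceForm_comm ℝ 𝔤 𝔤 ⁅X, Z⁆ Y]
    linarith
  have comm : ∀ X Y : 𝔤, killingForm ℝ 𝔤 X Y = killingForm ℝ 𝔤 Y X :=
    fun X Y => LieModule.traceForm_comm ℝ 𝔤 𝔤 X Y
  have proj₁ : ∀ W Z : 𝔤, killingForm ℝ 𝔤 (p₁ W) (p₁ Z) = killingForm ℝ 𝔤 W (p₁ Z) := by
    intro W Z
    conv_rhs => rw [← hpsum W]
    simp only [map_add, LinearMap.add_apply]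
    rw [horth𝔨₁ _ (hp𝔨mem W) _ (hp₁mem Z), comm (p₂ W), horth₁₂ _ (hp₁mem Z) _ (hp₂mem W)]
    ring
  have proj₂ : ∀ W Z : 𝔤, killingForm ℝ 𝔤 (p₂ W) (p₂ Z) = killingForm ℝ 𝔤 W (p₂ Z) := by
    intro W Z
    conv_rhs => rw [← hpsum W]
    simp only [map_add, LinearMap.add_apply]
    rw [horth𝔨₂ _ (hp𝔨mem W) _ (hp₂mem Z), horth₁₂ _ (hp₁mem W) _ (hp₂mem Z)]
    ring
  have hT : ∀ X ∈ 𝔪₁ ⊔ 𝔪₂, ∀ Y ∈ 𝔪₁ ⊔ 𝔪₂,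
      TorST 𝔤 Λ p₁ p₂ X Y = (s - 1) • (p₁ ⁅X, Y⁆ + p₂ ⁅X, Y⁆) := by
    intro X hX Y hY
    obtain ⟨a, ha, b, hb, rfl⟩ := Submodule.mem_sup.1 hX
    obtain ⟨c, hc, d, hd, rfl⟩ := Submodule.mem_sup.1 hY
    have hac : p₁ ⁅a, c⁆ = 0 := by
      obtain ⟨u, hu, v, hv, huv⟩ := Submodule.mem_sup.1 (hb₁₁ a ha c hc)
      rw [← huv, map_add, h𝔨p₁ u hu, h₂p₁ v hv, add_zero]
    have hcb := hb₁₂ c hc b hb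
    have had := hb₁₂ a ha d hd
    have hbd := hb₂₂ b hb d hd
    simp only [TorST, map_add, LinearMap.add_apply, add_lie, lie_add, hΛ11 a ha c hc,
      hΛ11 c hc a ha, hΛ12 a ha d hd, hΛ12 c hc b hb, hΛ21 b hb c hc, hΛ21 d hd a ha,
      hΛ22 b hb d hd, hΛ22 d hd b hb, ← lie_skew c a, ← lie_skew d a, ← lie_skew b c,
      map_neg, hac, hid₁ _ hcb, hid₁ _ had, h₁p₂ _ hcb, h₁p₂ _ had, h𝔨p₁ _ hbd, h𝔨p₂ _ hbd]
    module
  have hg : ∀ X ∈ 𝔪₁ ⊔ 𝔪₂, ∀ Y ∈ 𝔪₁ ⊔ 𝔪₂, ∀ Z : 𝔤,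
      gMet 𝔤 p₁ p₂ t (TorST 𝔤 Λ p₁ p₂ X Y) Z = (1 - s) *
        (killingForm ℝ 𝔤 ⁅X, Y⁆ (p₁ Z) + 2 * t * killingForm ℝ 𝔤 ⁅X, Y⁆ (p₂ Z)) := by
    intro X hX Y hY Z
    rw [hT X hX Y hY]
    simp only [gMet, NegKilling, map_smul, map_add, hid₁ _ (hp₁mem _), hid₂ _ (hp₂mem _),
      h₁p₂ _ (hp₁mem _), h₂p₁ _ (hp₂mem _), add_zero, zero_add, LinearMap.smul_apply,
      smul_eq_mul, proj₁, proj₂]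
    ring
  constructor
  · intro h
    obtain ⟨X, hX, Y, hY, hne⟩ := hex
    have hX' : X ∈ 𝔪₁ ⊔ 𝔪₂ := Submodule.mem_sup_left hX
    have hY' : Y ∈ 𝔪₁ ⊔ 𝔪₂ := Submodule.mem_sup_left hY
    have hZ' : p₂ ⁅X, Y⁆ ∈ 𝔪₁ ⊔ 𝔪₂ := Submodule.mem_sup_right (hp₂mem _)
    have e := (h X hX' Y hY' _ hZ').2
    rw [hg X hX' Y hY', hg X hX' _ hZ', h₂p₁ _ (hp₂mem _), hid₂ _ (hp₂mem _), hid₁ Y hY,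
      h₁p₂ Y hY, inv X (p₂ _) Y, ← proj₂] at e
    simp only [map_zero, zero_add, mul_zero, add_zero] at e
    have hneg := hκ _ hne
    have hs' : 1 - s ≠ 0 := sub_ne_zero.2 hs.symm
    have e' : ((1 - s) * killingForm ℝ 𝔤 (p₂ ⁅X, Y⁆) (p₂ ⁅X, Y⁆)) * (2 * t - 1) = 0 := by
      linear_combination e
    have := (mul_eq_zero.1 e').resolve_left (mul_ne_zero hs' hneg.ne)
    linarith
  · intro h12 X hX Y hY Z hZ
    have hfull : ∀ W : 𝔤, ∀ V ∈ 𝔪₁ ⊔ 𝔪₂,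
        killingForm ℝ 𝔤 W (p₁ V) + 2 * t * killingForm ℝ 𝔤 W (p₂ V) = killingForm ℝ 𝔤 W V := by
      intro W V hV
      obtain ⟨a, ha, b, hb, rfl⟩ := Submodule.mem_sup.1 hV
      simp only [map_add, hid₁ a ha, hid₂ b hb, h₁p₂ a ha, h₂p₁ b hb, h12]
      simp
    rw [hg X hX Y hY, hg Y hY X hX, hg X hX Z hZ, hfull _ Z hZ, hfull _ Z hZ, hfull _ Y hY]
    constructor
    · rw [← lie_skew X Y, LinearMap.BilinForm.neg_left]
      ring
    · rw [inv X Y Z]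
      ring
end

section
/- The scalar curvature Scal^{s,t} := Σ_{i=1}^{d₁} Ric^{s,t}(Xᵢ,Xᵢ) + (1/(2t))·Σ_{k=1}^{d₂} Ric^{s,t}(Yₖ,Yₖ) equals −((s²t − 2s + 2st)/2)·Σ_{i,j=1}^{d₁} B([Xᵢ,Xⱼ]_{𝔪₂}, [Xᵢ,Xⱼ]_{𝔪₂}) − (s² − s²t − s)·Σ_{i=1}^{d₁}Σ_{k=1}^{d₂} B([Xᵢ,Yₖ], [Xᵢ,Yₖ]) + Σ_{i=1}^{d₁} A₁(Xᵢ,Xᵢ) + (1/(2t))·Σ_{k=1}^{d₂} A₂(Yₖ,Yₖ). -/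
/-!
The identity holds term by term in the double sums that make up the scalar curvature. Since
`Λ(Y)Y = 0` for `Y` in either summand, `R(X,Y)Y` reduces to
`−Λ(Y)(Λ(X)Y) − Λ([X,Y]_𝔪)Y − [[X,Y]_𝔨, Y]`, and each piece is a multiple of a double bracket.
Invariance of the Killing form, in the form `B([Z,Y],X) = −B(Z,[X,Y])`
(`killingForm_lie_lie_left`), turns `g_t(R(X,Y)Y, X)` into multiples of squared norms of components
of `[X,Y]`; orthogonality of the summands discards the cross terms. With `|·|² = B(·,·)` the sectional
terms are

* `X, Y ∈ 𝔪₁`: `(−s²t/2 + s(1−t)) |[X,Y]_{𝔪₂}|² + |[X,Y]_𝔨|²`;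
* `X ∈ 𝔪₁, Y ∈ 𝔪₂`: `(−s²t(1−t) + st) |[X,Y]|²`;
* `X ∈ 𝔪₂, Y ∈ 𝔪₁`: `2t (−s²(1−t) + s)/2 · |[X,Y]|²`;
* `X, Y ∈ 𝔪₂`: `2t |[X,Y]|²`.

The two mixed cases contribute equally once weighted by `1/(2t)`, and summing gives the formula.
-/

/-- Invariance of the Killing form together with its symmetry and the antisymmetry of the bracket. -/
lemma killingForm_lie_lie_left {𝔤 : Type*} [LieRing 𝔤] [LieAlgebra ℝ 𝔤] (X Y Z : 𝔤) :
    killingForm ℝ 𝔤 ⁅Z, Y⁆ X = - killingForm ℝ 𝔤 Z ⁅X, Y⁆ := by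
  have h := LieModule.traceForm_apply_lie_apply ℝ 𝔤 𝔤 Z Y X
  rw [← lie_skew X Y, map_neg, neg_neg]
  exact h


open scoped BigOperators

/-- The curvature
`R^{s,t}(X,Y)Z := Λ(X)(Λ(Y)Z) − Λ(Y)(Λ(X)Z) − Λ([X,Y]_𝔪)Z − [[X,Y]_𝔨, Z]`. -/
noncomputable def CurvST (𝔤 : Type*) [LieRing 𝔤] [LieAlgebra ℝ 𝔤]
    (Λ : 𝔤 →ₗ[ℝ] 𝔤 →ₗ[ℝ] 𝔤) (p𝔨 p₁ p₂ : 𝔤 →ₗ[ℝ] 𝔤) (X Y Z : 𝔤) : 𝔤 :=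
  Λ X (Λ Y Z) - Λ Y (Λ X Z) - Λ (p₁ ⁅X, Y⁆ + p₂ ⁅X, Y⁆) Z - ⁅p𝔨 ⁅X, Y⁆, Z⁆

/-- The Ricci tensor
`Ric^{s,t}(X,Y) := Σᵢ g_t(R^{s,t}(X,Xᵢ)Xᵢ, Y) + (1/(2t))·Σₖ g_t(R^{s,t}(X,Yₖ)Yₖ, Y)`. -/
noncomputable def RicST (𝔤 : Type*) [LieRing 𝔤] [LieAlgebra ℝ 𝔤]
    (Λ : 𝔤 →ₗ[ℝ] 𝔤 →ₗ[ℝ] 𝔤) (p𝔨 p₁ p₂ : 𝔤 →ₗ[ℝ] 𝔤) (t : ℝ)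
    {d₁ d₂ : ℕ} (Xb : Fin d₁ → 𝔤) (Yb : Fin d₂ → 𝔤) (X Y : 𝔤) : ℝ :=
  (∑ i, gMet 𝔤 p₁ p₂ t (CurvST 𝔤 Λ p𝔨 p₁ p₂ X (Xb i) (Xb i)) Y)
    + (1 / (2 * t)) * ∑ k, gMet 𝔤 p₁ p₂ t (CurvST 𝔤 Λ p𝔨 p₁ p₂ X (Yb k) (Yb k)) Y

/-- The scalar curvature of the two-parameter family of invariant metric
connections `∇^{s,t}` on a homogeneous space with two isotropy summands. -/
theorem stmt_16 (𝔤 : Type*) [LieRing 𝔤] [LieAlgebra ℝ 𝔤] [FiniteDimensional ℝ 𝔤]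
    (hκ : ∀ X : 𝔤, X ≠ 0 → killingForm ℝ 𝔤 X X < 0)
    (𝔨 𝔪₁ 𝔪₂ : Submodule ℝ 𝔤)
    (h𝔪₁ : 𝔪₁ ≠ ⊥) (h𝔪₂ : 𝔪₂ ≠ ⊥)
    (p𝔨 p₁ p₂ : 𝔤 →ₗ[ℝ] 𝔤)
    (hp𝔨mem : ∀ X : 𝔤, p𝔨 X ∈ 𝔨) (hp₁mem : ∀ X : 𝔤, p₁ X ∈ 𝔪₁) (hp₂mem : ∀ X : 𝔤, p₂ X ∈ 𝔪₂)
    (hpsum : ∀ X : 𝔤, p𝔨 X + p₁ X + p₂ X = X)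
    (hid𝔨 : ∀ X ∈ 𝔨, p𝔨 X = X) (hid₁ : ∀ X ∈ 𝔪₁, p₁ X = X) (hid₂ : ∀ X ∈ 𝔪₂, p₂ X = X)
    (h𝔨p₁ : ∀ X ∈ 𝔨, p₁ X = 0) (h𝔨p₂ : ∀ X ∈ 𝔨, p₂ X = 0)
    (h₁p𝔨 : ∀ X ∈ 𝔪₁, p𝔨 X = 0) (h₁p₂ : ∀ X ∈ 𝔪₁, p₂ X = 0)
    (h₂p𝔨 : ∀ X ∈ 𝔪₂, p𝔨 X = 0) (h₂p₁ : ∀ X ∈ 𝔪₂, p₁ X = 0)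
    (horth𝔨₁ : ∀ X ∈ 𝔨, ∀ Y ∈ 𝔪₁, killingForm ℝ 𝔤 X Y = 0)
    (horth𝔨₂ : ∀ X ∈ 𝔨, ∀ Y ∈ 𝔪₂, killingForm ℝ 𝔤 X Y = 0)
    (horth₁₂ : ∀ X ∈ 𝔪₁, ∀ Y ∈ 𝔪₂, killingForm ℝ 𝔤 X Y = 0)
    (h𝔨𝔨 : ∀ X ∈ 𝔨, ∀ Y ∈ 𝔨, ⁅X, Y⁆ ∈ 𝔨)
    (hb𝔨₁ : ∀ X ∈ 𝔨, ∀ Y ∈ 𝔪₁, ⁅X, Y⁆ ∈ 𝔪₁)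
    (hb𝔨₂ : ∀ X ∈ 𝔨, ∀ Y ∈ 𝔪₂, ⁅X, Y⁆ ∈ 𝔪₂)
    (hb₁₁ : ∀ X ∈ 𝔪₁, ∀ Y ∈ 𝔪₁, ⁅X, Y⁆ ∈ 𝔨 ⊔ 𝔪₂)
    (hb₁₂ : ∀ X ∈ 𝔪₁, ∀ Y ∈ 𝔪₂, ⁅X, Y⁆ ∈ 𝔪₁)
    (hb₂₂ : ∀ X ∈ 𝔪₂, ∀ Y ∈ 𝔪₂, ⁅X, Y⁆ ∈ 𝔨)
    (s t : ℝ) (ht : 0 < t)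
    (Λ : 𝔤 →ₗ[ℝ] 𝔤 →ₗ[ℝ] 𝔤)
    (hΛ11 : ∀ X ∈ 𝔪₁, ∀ Y ∈ 𝔪₁, Λ X Y = (s / 2) • p₂ ⁅X, Y⁆)
    (hΛ12 : ∀ X ∈ 𝔪₁, ∀ Y ∈ 𝔪₂, Λ X Y = (s * t) • ⁅X, Y⁆)
    (hΛ21 : ∀ X ∈ 𝔪₂, ∀ Y ∈ 𝔪₁, Λ X Y = (s * (1 - t)) • ⁅X, Y⁆)
    (hΛ22 : ∀ X ∈ 𝔪₂, ∀ Y ∈ 𝔪₂, Λ X Y = 0)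
    (d₁ d₂ : ℕ) (Xb : Fin d₁ → 𝔤) (Yb : Fin d₂ → 𝔤)
    (hXbmem : ∀ i, Xb i ∈ 𝔪₁) (hYbmem : ∀ k, Yb k ∈ 𝔪₂)
    (hXbon : ∀ i j, NegKilling 𝔤 (Xb i) (Xb j) = if i = j then 1 else 0)
    (hYbon : ∀ k l, NegKilling 𝔤 (Yb k) (Yb l) = if k = l then 1 else 0)
    (hXbspan : Submodule.span ℝ (Set.range Xb) = 𝔪₁)
    (hYbspan : Submodule.span ℝ (Set.range Yb) = 𝔪₂) :
    (∑ i, RicST 𝔤 Λ p𝔨 p₁ p₂ t Xb Yb (Xb i) (Xb i))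
      + (1 / (2 * t)) * ∑ k, RicST 𝔤 Λ p𝔨 p₁ p₂ t Xb Yb (Yb k) (Yb k)
    = - ((s ^ 2 * t - 2 * s + 2 * s * t) / 2)
          * (∑ i, ∑ j, NegKilling 𝔤 (p₂ ⁅Xb i, Xb j⁆) (p₂ ⁅Xb i, Xb j⁆))
      - (s ^ 2 - s ^ 2 * t - s)
          * (∑ i, ∑ k, NegKilling 𝔤 ⁅Xb i, Yb k⁆ ⁅Xb i, Yb k⁆)
      + (∑ i, ∑ j, NegKilling 𝔤 (p𝔨 ⁅Xb i, Xb j⁆) (p𝔨 ⁅Xb i, Xb j⁆))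
      + (1 / (2 * t)) * ∑ k, ∑ l, NegKilling 𝔤 ⁅Yb k, Yb l⁆ ⁅Yb k, Yb l⁆ := by
  have hinv := fun X Y Z : 𝔤 => killingForm_lie_lie_left X Y Z
  have hinv' : ∀ X Y Z : 𝔤, killingForm ℝ 𝔤 ⁅Y, Z⁆ X = killingForm ℝ 𝔤 Z ⁅X, Y⁆ := by
    intro X Y Z
    rw [← lie_skew Y Z, map_neg, LinearMap.neg_apply, hinv, neg_neg]
  have hb₂₁ : ∀ X ∈ 𝔪₂, ∀ Y ∈ 𝔪₁, ⁅X, Y⁆ ∈ 𝔪₁ := by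
    intro X hX Y hY
    rw [← lie_skew]
    exact 𝔪₁.neg_mem (hb₁₂ Y hY X hX)
  have hp₁11 : ∀ X ∈ 𝔪₁, ∀ Y ∈ 𝔪₁, p₁ ⁅X, Y⁆ = 0 := by
    intro X hX Y hY
    obtain ⟨a, ha, b, hb, hab⟩ := Submodule.mem_sup.1 (hb₁₁ X hX Y hY)
    rw [← hab, map_add, h𝔨p₁ a ha, h₂p₁ b hb, add_zero]
  have hself1 : ∀ X ∈ 𝔪₁, Λ X X = 0 := fun X hX => by simp [hΛ11 X hX X hX]
  -- The four kinds of sectional terms `g_t(R(X,Y)Y, X)`.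
  have h11 : ∀ X ∈ 𝔪₁, ∀ Y ∈ 𝔪₁, gMet 𝔤 p₁ p₂ t (CurvST 𝔤 Λ p𝔨 p₁ p₂ X Y Y) X
      = - ((s ^ 2 * t - 2 * s + 2 * s * t) / 2) * NegKilling 𝔤 (p₂ ⁅X, Y⁆) (p₂ ⁅X, Y⁆)
        + NegKilling 𝔤 (p𝔨 ⁅X, Y⁆) (p𝔨 ⁅X, Y⁆) := by
    intro X hX Y hY
    have hZ := hp₂mem ⁅X, Y⁆
    have hK := hp𝔨mem ⁅X, Y⁆
    have hdec : ⁅X, Y⁆ = p𝔨 ⁅X, Y⁆ + p₂ ⁅X, Y⁆ := by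
      have := hpsum ⁅X, Y⁆
      rw [hp₁11 X hX Y hY, add_zero] at this
      exact this.symm
    have hBZ : killingForm ℝ 𝔤 (p₂ ⁅X, Y⁆) ⁅X, Y⁆
        = killingForm ℝ 𝔤 (p₂ ⁅X, Y⁆) (p₂ ⁅X, Y⁆) := by
      conv_lhs => arg 2; rw [hdec]
      rw [map_add, LieModule.traceForm_comm ℝ 𝔤 𝔤 (p₂ ⁅X, Y⁆) (p𝔨 ⁅X, Y⁆),
        horth𝔨₂ _ hK _ hZ, zero_add]
    have hBK : killingForm ℝ 𝔤 (p𝔨 ⁅X, Y⁆) ⁅X, Y⁆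
        = killingForm ℝ 𝔤 (p𝔨 ⁅X, Y⁆) (p𝔨 ⁅X, Y⁆) := by
      conv_lhs => arg 2; rw [hdec]
      rw [map_add, horth𝔨₂ _ hK _ hZ, add_zero]
    have hc : CurvST 𝔤 Λ p𝔨 p₁ p₂ X Y Y
        = -((s / 2 * (s * t)) • ⁅Y, p₂ ⁅X, Y⁆⁆) - (s * (1 - t)) • ⁅p₂ ⁅X, Y⁆, Y⁆
          - ⁅p𝔨 ⁅X, Y⁆, Y⁆ := by
      rw [CurvST, hself1 Y hY, hΛ11 X hX Y hY, hp₁11 X hX Y hY, zero_add, hΛ21 _ hZ Y hY,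
        map_smul, hΛ12 Y hY _ hZ, map_zero, smul_smul, zero_sub]
    rw [hc, gMet]
    simp only [map_sub, map_neg, map_smul, hid₁ _ (hb₁₂ Y hY _ hZ), hid₁ _ (hb₂₁ _ hZ Y hY),
      hid₁ _ (hb𝔨₁ _ hK Y hY), hid₁ X hX, h₁p₂ X hX, NegKilling, LinearMap.sub_apply,
      LinearMap.neg_apply, LinearMap.smul_apply, smul_eq_mul, map_zero]
    rw [hinv' X Y (p₂ ⁅X, Y⁆), hinv X Y (p₂ ⁅X, Y⁆), hinv X Y (p𝔨 ⁅X, Y⁆), hBZ, hBK]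
    ring
  have h12 : ∀ X ∈ 𝔪₁, ∀ Y ∈ 𝔪₂, gMet 𝔤 p₁ p₂ t (CurvST 𝔤 Λ p𝔨 p₁ p₂ X Y Y) X
      = (- (s ^ 2 * t * (1 - t)) + s * t) * NegKilling 𝔤 ⁅X, Y⁆ ⁅X, Y⁆ := by
    intro X hX Y hY
    have hW := hb₁₂ X hX Y hY
    have hc : CurvST 𝔤 Λ p𝔨 p₁ p₂ X Y Y
        = -((s * t * (s * (1 - t))) • ⁅Y, ⁅X, Y⁆⁆) - (s * t) • ⁅⁅X, Y⁆, Y⁆ := by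
      rw [CurvST, hΛ22 Y hY Y hY, hΛ12 X hX Y hY, hid₁ _ hW, h₁p₂ _ hW, h₁p𝔨 _ hW, add_zero,
        hΛ12 _ hW Y hY, map_smul, hΛ21 Y hY _ hW, map_zero, smul_smul, zero_sub, zero_lie, sub_zero]
    rw [hc, gMet]
    simp only [map_sub, map_neg, map_smul, hid₁ _ (hb₂₁ Y hY _ hW), hid₁ _ (hb₁₂ _ hW Y hY),
      hid₁ X hX, h₁p₂ X hX, NegKilling, LinearMap.sub_apply, LinearMap.neg_apply,
      LinearMap.smul_apply, smul_eq_mul, map_zero]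
    rw [hinv' X Y ⁅X, Y⁆, hinv X Y ⁅X, Y⁆]
    ring
  have h21 : ∀ X ∈ 𝔪₂, ∀ Y ∈ 𝔪₁, gMet 𝔤 p₁ p₂ t (CurvST 𝔤 Λ p𝔨 p₁ p₂ X Y Y) X
      = t * (- (s ^ 2 * (1 - t)) + s) * NegKilling 𝔤 ⁅Y, X⁆ ⁅Y, X⁆ := by
    intro X hX Y hY
    have hV := hb₂₁ X hX Y hY
    have hc : CurvST 𝔤 Λ p𝔨 p₁ p₂ X Y Y
        = -((s * (1 - t) * (s / 2)) • p₂ ⁅Y, ⁅X, Y⁆⁆) - (s / 2) • p₂ ⁅⁅X, Y⁆, Y⁆ := by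
      rw [CurvST, hself1 Y hY, hΛ21 X hX Y hY, hid₁ _ hV, h₁p₂ _ hV, h₁p𝔨 _ hV, add_zero,
        hΛ11 _ hV Y hY, map_smul, hΛ11 Y hY _ hV, map_zero, smul_smul, zero_sub, zero_lie, sub_zero]
    -- Only the `𝔪₂`-component of `[𝔪₁,𝔪₁] ⊆ 𝔨 ⊕ 𝔪₂` pairs with `X`.
    have hproj : ∀ U ∈ 𝔪₁, ∀ V ∈ 𝔪₁,
        killingForm ℝ 𝔤 (p₂ ⁅U, V⁆) X = killingForm ℝ 𝔤 ⁅U, V⁆ X := by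
      intro U hU V hV
      conv_rhs => rw [← hpsum ⁅U, V⁆]
      rw [hp₁11 U hU V hV, add_zero, map_add, LinearMap.add_apply,
        horth𝔨₂ _ (hp𝔨mem _) _ hX, zero_add]
    rw [hc, gMet]
    simp only [map_sub, map_neg, map_smul, hid₂ _ (hp₂mem _), hid₂ X hX, h₂p₁ X hX, NegKilling,
      LinearMap.sub_apply, LinearMap.neg_apply, LinearMap.smul_apply, smul_eq_mul, map_zero,
      hproj Y hY _ hV, hproj _ hV Y hY]
    rw [hinv' X Y ⁅X, Y⁆, hinv X Y ⁅X, Y⁆, ← lie_skew Y X]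
    simp only [map_neg, LinearMap.neg_apply]
    ring
  have h22 : ∀ X ∈ 𝔪₂, ∀ Y ∈ 𝔪₂, gMet 𝔤 p₁ p₂ t (CurvST 𝔤 Λ p𝔨 p₁ p₂ X Y Y) X
      = 2 * t * NegKilling 𝔤 ⁅X, Y⁆ ⁅X, Y⁆ := by
    intro X hX Y hY
    have hK := hb₂₂ X hX Y hY
    have hc : CurvST 𝔤 Λ p𝔨 p₁ p₂ X Y Y = -⁅⁅X, Y⁆, Y⁆ := by
      rw [CurvST, hΛ22 Y hY Y hY, hΛ22 X hX Y hY, h𝔨p₁ _ hK, h𝔨p₂ _ hK, hid𝔨 _ hK, map_zero, map_zero, add_zero, map_zero,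
        LinearMap.zero_apply, sub_zero, sub_zero, zero_sub]
    rw [hc, gMet]
    simp only [map_neg, hid₂ _ (hb𝔨₂ _ hK Y hY), hid₂ X hX, h₂p₁ X hX, NegKilling,
      LinearMap.neg_apply, map_zero]
    rw [hinv X Y ⁅X, Y⁆]
    ring
  have ht' : t ≠ 0 := ht.ne'
  simp only [RicST, h11 _ (hXbmem _) _ (hXbmem _), h12 _ (hXbmem _) _ (hYbmem _),
    h21 _ (hYbmem _) _ (hXbmem _), h22 _ (hYbmem _) _ (hYbmem _),
    Finset.sum_add_distrib, ← Finset.mul_sum]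
  rw [Finset.sum_comm (s := (Finset.univ : Finset (Fin d₂)))
    (t := (Finset.univ : Finset (Fin d₁)))]
  field_simp
  ring
end

section
/- At t = 1/2, write Λ_s := Λ_{s,1/2} and T^s := T^{s,1/2}, so that T^s(X,Y) = (s−1)[X,Y]_𝔪, and define (∇^s_Z T^s)(X,Y) := Λ_s(Z)(T^s(X,Y)) − T^s(Λ_s(Z)X, Y) − T^s(X, Λ_s(Z)Y). Then: (i) for X,Y,Z ∈ 𝔪₁, (∇^s_Z T^s)(X,Y) = (s(s−1)/2)·( [X,[Y,Z]_{𝔪₂}] + [Y,[Z,X]_{𝔪₂}] + [Z,[X,Y]_{𝔪₂}] ); (ii) for X,Y ∈ 𝔪₁ and Z ∈ 𝔪₂, (∇^s_Z T^s)(X,Y) = −(s(s−1)/2)·[Z, [X,Y]_𝔨]; (iii) for X,Y ∈ 𝔪₂ and Z ∈ 𝔪₁, (∇^s_Z T^s)(X,Y) = −(s(s−1)/2)·[Z, [X,Y]]; (iv) for X,Y,Z ∈ 𝔪₂, (∇^s_Z T^s)(X,Y) = 0. Moreover the co-differential of the torsion vanishes: Σ_{i=1}^{d₁} B((∇^s_{Xᵢ}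 T^s)(Xᵢ, X), Y) + Σ_{k=1}^{d₂} B((∇^s_{Yₖ} T^s)(Yₖ, X), Y) = 0 for all X,Y ∈ 𝔪 and all s ∈ ℝ. -/
/-!
Write `q = p₁ + p₂` for the projection onto `𝔪`. The bracket relations make the four cases of the
definition of `Λ_s` collapse into `Λ_s(X)Y = (s/2) q[X,Y]` for all `X, Y ∈ 𝔪`, so that
`T^s(X,Y) = (s-1) q[X,Y]` on `𝔪`, and `(∇^s_Z T^s)(X,Y)` is `s(s-1)/2` times
`q[Z,q[X,Y]] - q[q[Z,X],Y] - q[X,q[Z,Y]]`. Substituting `q = id - p𝔨` in the inner brackets, the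
Jacobi identity cancels the main terms, and `[𝔨,𝔪] ⊆ 𝔪` removes the outer `q`; what remains is
the cyclic formula

`(∇^s_Z T^s)(X,Y) = -(s(s-1)/2) ([Z,p𝔨[X,Y]] + [X,p𝔨[Y,Z]] + [Y,p𝔨[Z,X]])`   for `X, Y, Z ∈ 𝔪`.

The four cases are read off from it by `p𝔨[𝔪₁,𝔪₂] = 0`, `p𝔨 = id` on `[𝔪₂,𝔪₂]`,
`p𝔨 = id - p₂` on `[𝔪₁,𝔪₁]`, and the Jacobi identity. Its right-hand side is alternating
in `X, Y, Z`, so every single summand of the co-differential vanishes.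
-/


open scoped BigOperators

/-- The torsion `T^s(X,Y) := Λ_s(X)Y − Λ_s(Y)X − [X,Y]_𝔪`, with
`[X,Y]_𝔪 = p₁[X,Y] + p₂[X,Y]`. -/
noncomputable def TorS (𝔤 : Type*) [LieRing 𝔤] [LieAlgebra ℝ 𝔤]
    (Λ : 𝔤 →ₗ[ℝ] 𝔤 →ₗ[ℝ] 𝔤) (p₁ p₂ : 𝔤 →ₗ[ℝ] 𝔤) (X Y : 𝔤) : 𝔤 :=
  Λ X Y - Λ Y X - (p₁ ⁅X, Y⁆ + p₂ ⁅X, Y⁆)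

/-- The covariant derivative of the torsion,
`(∇^s_Z T^s)(X,Y) := Λ_s(Z)(T^s(X,Y)) − T^s(Λ_s(Z)X, Y) − T^s(X, Λ_s(Z)Y)`. -/
noncomputable def CovTorS (𝔤 : Type*) [LieRing 𝔤] [LieAlgebra ℝ 𝔤]
    (Λ : 𝔤 →ₗ[ℝ] 𝔤 →ₗ[ℝ] 𝔤) (p₁ p₂ : 𝔤 →ₗ[ℝ] 𝔤) (Z X Y : 𝔤) : 𝔤 :=
  Λ Z (TorS 𝔤 Λ p₁ p₂ X Y) - TorS 𝔤 Λ p₁ p₂ (Λ Z X) Y - TorS 𝔤 Λ p₁ p₂ X (Λ Z Y)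

/-- If `Λ(X)Y = c q[X,Y]` on `𝔪` with `q = p₁ + p₂`, then the antisymmetry of the bracket makes the
torsion `(2c-1) q[X,Y]` there. -/
theorem torS_of_eq_smul {𝔤 : Type*} [LieRing 𝔤] [LieAlgebra ℝ 𝔤] (𝔪 : Submodule ℝ 𝔤)
    (p₁ p₂ : 𝔤 →ₗ[ℝ] 𝔤) (c : ℝ) (Λ : 𝔤 →ₗ[ℝ] 𝔤 →ₗ[ℝ] 𝔤)
    (hΛ : ∀ X ∈ 𝔪, ∀ Y ∈ 𝔪, Λ X Y = c • (p₁ + p₂) ⁅X, Y⁆) (X Y : 𝔤) (hX : X ∈ 𝔪) (hY : Y ∈ 𝔪) :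
    TorS 𝔤 Λ p₁ p₂ X Y = (2 * c - 1) • (p₁ + p₂) ⁅X, Y⁆ := by
  rw [TorS, hΛ X hX Y hY, hΛ Y hY X hX, ← lie_skew X Y, map_neg, ← LinearMap.add_apply, map_neg]
  module

/-- The cyclic formula for the covariant derivative of the torsion, valid for any reductive
decomposition `𝔨 ⊕ 𝔪` and any connection with `Λ(X)Y = c [X,Y]_𝔪`. -/
theorem covTorS_cyclic {𝔤 : Type*} [LieRing 𝔤] [LieAlgebra ℝ 𝔤] (𝔪 : Submodule ℝ 𝔤)
    (p𝔨 p₁ p₂ : 𝔤 →ₗ[ℝ] 𝔤) (c : ℝ) (Λ : 𝔤 →ₗ[ℝ] 𝔤 →ₗ[ℝ] 𝔤)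
    (hqm : ∀ X, (p₁ + p₂) X ∈ 𝔪) (hsum : ∀ X, (p₁ + p₂) X = X - p𝔨 X)
    (hq : ∀ X ∈ 𝔪, (p₁ + p₂) X = X) (hkm : ∀ X, ∀ Y ∈ 𝔪, ⁅Y, p𝔨 X⁆ ∈ 𝔪)
    (hΛ : ∀ X ∈ 𝔪, ∀ Y ∈ 𝔪, Λ X Y = c • (p₁ + p₂) ⁅X, Y⁆)
    (X Y Z : 𝔤) (hX : X ∈ 𝔪) (hY : Y ∈ 𝔪) (hZ : Z ∈ 𝔪) :
    CovTorS 𝔤 Λ p₁ p₂ Z X Y = (-(c * (2 * c - 1))) •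
      (⁅Z, p𝔨 ⁅X, Y⁆⁆ + ⁅X, p𝔨 ⁅Y, Z⁆⁆ + ⁅Y, p𝔨 ⁅Z, X⁆⁆) := by
  have hT := torS_of_eq_smul 𝔪 p₁ p₂ c Λ hΛ
  have hΛm : ∀ W ∈ 𝔪, Λ Z W ∈ 𝔪 := fun W hW => by
    rw [hΛ Z hZ W hW]; exact 𝔪.smul_mem _ (hqm _)
  rw [CovTorS, hT X Y hX hY, hT _ Y (hΛm X hX) hY, hT X _ hX (hΛm Y hY), map_smul,
    hΛ Z hZ _ (hqm _), hΛ Z hZ X hX, hΛ Z hZ Y hY]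
  generalize hQ : p₁ + p₂ = q at *
  have e : ∀ W ∈ 𝔪, ∀ V, q ⁅W, q V⁆ = q ⁅W, V⁆ - ⁅W, p𝔨 V⁆ := fun W hW V => by
    rw [hsum V, lie_sub, map_sub, hq _ (hkm V W hW)]
  have j : q ⁅Z, ⁅X, Y⁆⁆ + q ⁅X, ⁅Y, Z⁆⁆ + q ⁅Y, ⁅Z, X⁆⁆ = 0 := by
    rw [← map_add, ← map_add, lie_jacobi Z X Y, map_zero]
  rw [smul_lie, lie_smul, map_smul, map_smul, ← lie_skew Z Y, map_neg q ⁅Y, Z⁆, lie_neg,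
    ← lie_skew (q ⁅Z, X⁆) Y, map_neg, map_neg, e Z hZ, e X hX, e Y hY]
  rw [eq_neg_of_add_eq_zero_right j]
  module

/-- At `t = 1/2`, the covariant derivative of the torsion `T^s` of the
family `∇^s := ∇^{s,1/2}` is given case-by-case on `𝔪₁`, `𝔪₂` by the stated formulas,
and the co-differential of the torsion vanishes for every `s ∈ ℝ`. -/
theorem stmt_17 (𝔤 : Type*) [LieRing 𝔤] [LieAlgebra ℝ 𝔤] [FiniteDimensional ℝ 𝔤]
    (hκ : ∀ X : 𝔤, X ≠ 0 → killingForm ℝ 𝔤 X X < 0)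
    (𝔨 𝔪₁ 𝔪₂ : Submodule ℝ 𝔤)
    (h𝔪₁ : 𝔪₁ ≠ ⊥) (h𝔪₂ : 𝔪₂ ≠ ⊥)
    (p𝔨 p₁ p₂ : 𝔤 →ₗ[ℝ] 𝔤)
    (hp𝔨mem : ∀ X : 𝔤, p𝔨 X ∈ 𝔨) (hp₁mem : ∀ X : 𝔤, p₁ X ∈ 𝔪₁) (hp₂mem : ∀ X : 𝔤, p₂ X ∈ 𝔪₂)
    (hpsum : ∀ X : 𝔤, p𝔨 X + p₁ X + p₂ X = X)
    (hid𝔨 : ∀ X ∈ 𝔨, p𝔨 X = X) (hid₁ : ∀ X ∈ 𝔪₁, p₁ X = X) (hid₂ : ∀ X ∈ 𝔪₂, p₂ X = X)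
    (h𝔨p₁ : ∀ X ∈ 𝔨, p₁ X = 0) (h𝔨p₂ : ∀ X ∈ 𝔨, p₂ X = 0)
    (h₁p𝔨 : ∀ X ∈ 𝔪₁, p𝔨 X = 0) (h₁p₂ : ∀ X ∈ 𝔪₁, p₂ X = 0)
    (h₂p𝔨 : ∀ X ∈ 𝔪₂, p𝔨 X = 0) (h₂p₁ : ∀ X ∈ 𝔪₂, p₁ X = 0)
    (horth𝔨₁ : ∀ X ∈ 𝔨, ∀ Y ∈ 𝔪₁, killingForm ℝ 𝔤 X Y = 0)
    (horth𝔨₂ : ∀ X ∈ 𝔨, ∀ Y ∈ 𝔪₂, killingForm ℝ 𝔤 X Y = 0)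
    (horth₁₂ : ∀ X ∈ 𝔪₁, ∀ Y ∈ 𝔪₂, killingForm ℝ 𝔤 X Y = 0)
    (h𝔨𝔨 : ∀ X ∈ 𝔨, ∀ Y ∈ 𝔨, ⁅X, Y⁆ ∈ 𝔨)
    (hb𝔨₁ : ∀ X ∈ 𝔨, ∀ Y ∈ 𝔪₁, ⁅X, Y⁆ ∈ 𝔪₁)
    (hb𝔨₂ : ∀ X ∈ 𝔨, ∀ Y ∈ 𝔪₂, ⁅X, Y⁆ ∈ 𝔪₂)
    (hb₁₁ : ∀ X ∈ 𝔪₁, ∀ Y ∈ 𝔪₁, ⁅X, Y⁆ ∈ 𝔨 ⊔ 𝔪₂)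
    (hb₁₂ : ∀ X ∈ 𝔪₁, ∀ Y ∈ 𝔪₂, ⁅X, Y⁆ ∈ 𝔪₁)
    (hb₂₂ : ∀ X ∈ 𝔪₂, ∀ Y ∈ 𝔪₂, ⁅X, Y⁆ ∈ 𝔨)
    (s : ℝ)
    (Λ : 𝔤 →ₗ[ℝ] 𝔤 →ₗ[ℝ] 𝔤)
    (hΛ11 : ∀ X ∈ 𝔪₁, ∀ Y ∈ 𝔪₁, Λ X Y = (s / 2) • p₂ ⁅X, Y⁆)
    (hΛ12 : ∀ X ∈ 𝔪₁, ∀ Y ∈ 𝔪₂, Λ X Y = (s / 2) • ⁅X, Y⁆)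
    (hΛ21 : ∀ X ∈ 𝔪₂, ∀ Y ∈ 𝔪₁, Λ X Y = (s / 2) • ⁅X, Y⁆)
    (hΛ22 : ∀ X ∈ 𝔪₂, ∀ Y ∈ 𝔪₂, Λ X Y = 0)
    (d₁ d₂ : ℕ) (Xb : Fin d₁ → 𝔤) (Yb : Fin d₂ → 𝔤)
    (hXbmem : ∀ i, Xb i ∈ 𝔪₁) (hYbmem : ∀ k, Yb k ∈ 𝔪₂)
    (hXbon : ∀ i j, NegKilling 𝔤 (Xb i) (Xb j) = if i = j then 1 else 0)
    (hYbon : ∀ k l, NegKilling 𝔤 (Yb k) (Yb l) = if k = l then 1 else 0)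
    (hXbspan : Submodule.span ℝ (Set.range Xb) = 𝔪₁)
    (hYbspan : Submodule.span ℝ (Set.range Yb) = 𝔪₂) :
    (∀ X ∈ 𝔪₁ ⊔ 𝔪₂, ∀ Y ∈ 𝔪₁ ⊔ 𝔪₂,
        TorS 𝔤 Λ p₁ p₂ X Y = (s - 1) • (p₁ ⁅X, Y⁆ + p₂ ⁅X, Y⁆))
    ∧ (∀ X ∈ 𝔪₁, ∀ Y ∈ 𝔪₁, ∀ Z ∈ 𝔪₁,
        CovTorS 𝔤 Λ p₁ p₂ Z X Y
          = (s * (s - 1) / 2) • (⁅X, p₂ ⁅Y, Z⁆⁆ + ⁅Y, p₂ ⁅Z, X⁆⁆ + ⁅Z, p₂ ⁅X, Y⁆⁆))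
    ∧ (∀ X ∈ 𝔪₁, ∀ Y ∈ 𝔪₁, ∀ Z ∈ 𝔪₂,
        CovTorS 𝔤 Λ p₁ p₂ Z X Y = (-(s * (s - 1) / 2)) • ⁅Z, p𝔨 ⁅X, Y⁆⁆)
    ∧ (∀ X ∈ 𝔪₂, ∀ Y ∈ 𝔪₂, ∀ Z ∈ 𝔪₁,
        CovTorS 𝔤 Λ p₁ p₂ Z X Y = (-(s * (s - 1) / 2)) • ⁅Z, ⁅X, Y⁆⁆)
    ∧ (∀ X ∈ 𝔪₂, ∀ Y ∈ 𝔪₂, ∀ Z ∈ 𝔪₂, CovTorS 𝔤 Λ p₁ p₂ Z X Y = 0)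
    ∧ (∀ X ∈ 𝔪₁ ⊔ 𝔪₂, ∀ Y ∈ 𝔪₁ ⊔ 𝔪₂,
        (∑ i, NegKilling 𝔤 (CovTorS 𝔤 Λ p₁ p₂ (Xb i) (Xb i) X) Y)
          + (∑ k, NegKilling 𝔤 (CovTorS 𝔤 Λ p₁ p₂ (Yb k) (Yb k) X) Y) = 0) := by
  have hq (W : 𝔤) : W ∈ 𝔪₁ ⊔ 𝔪₂ → (p₁ + p₂) W = W := fun hW => by
    obtain ⟨a, ha, b, hb, rfl⟩ := Submodule.mem_sup.1 hW
    simp [hid₁ a ha, h₁p₂ a ha, hid₂ b hb, h₂p₁ b hb]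
  have hqm (W : 𝔤) : (p₁ + p₂) W ∈ 𝔪₁ ⊔ 𝔪₂ :=
    Submodule.add_mem_sup (hp₁mem W) (hp₂mem W)
  have hsum (W : 𝔤) : (p₁ + p₂) W = W - p𝔨 W := by
    rw [LinearMap.add_apply, eq_sub_iff_add_eq', ← add_assoc, hpsum]
  have hkm (W : 𝔤) : ∀ V ∈ 𝔪₁ ⊔ 𝔪₂, ⁅V, p𝔨 W⁆ ∈ 𝔪₁ ⊔ 𝔪₂ := fun V hV => by
    obtain ⟨a, ha, b, hb, rfl⟩ := Submodule.mem_sup.1 hV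
    rw [← lie_skew, lie_add]
    exact neg_mem (Submodule.add_mem_sup (hb𝔨₁ _ (hp𝔨mem W) a ha) (hb𝔨₂ _ (hp𝔨mem W) b hb))
  have hp₁₁ : ∀ X ∈ 𝔪₁, ∀ Y ∈ 𝔪₁, p₁ ⁅X, Y⁆ = 0 := fun X hX Y hY => by
    obtain ⟨a, ha, b, hb, h⟩ := Submodule.mem_sup.1 (hb₁₁ X hX Y hY)
    rw [← h, map_add, h𝔨p₁ a ha, h₂p₁ b hb, add_zero]
  have hb₂₁ : ∀ X ∈ 𝔪₂, ∀ Y ∈ 𝔪₁, ⁅X, Y⁆ ∈ 𝔪₁ := fun X hX Y hY => by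
    rw [← lie_skew]; exact neg_mem (hb₁₂ Y hY X hX)
  have hΛ : ∀ X ∈ 𝔪₁ ⊔ 𝔪₂, ∀ Y ∈ 𝔪₁ ⊔ 𝔪₂, Λ X Y = (s / 2) • (p₁ + p₂) ⁅X, Y⁆ := by
    intro X hX Y hY
    obtain ⟨a, ha, b, hb, rfl⟩ := Submodule.mem_sup.1 hX
    obtain ⟨c, hc, d, hd, rfl⟩ := Submodule.mem_sup.1 hY
    have h1 : (p₁ + p₂) ⁅a, c⁆ = p₂ ⁅a, c⁆ := by simp [hp₁₁ a ha c hc]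
    have h2 := hq _ (Submodule.mem_sup_left (hb₁₂ a ha d hd))
    have h3 := hq _ (Submodule.mem_sup_left (hb₂₁ b hb c hc))
    have h4 : (p₁ + p₂) ⁅b, d⁆ = 0 := by
      simp [h𝔨p₁ _ (hb₂₂ b hb d hd), h𝔨p₂ _ (hb₂₂ b hb d hd)]
    rw [add_lie, lie_add, lie_add, map_add (p₁ + p₂), map_add (p₁ + p₂), map_add (p₁ + p₂),
      h1, h2, h3, h4, map_add Λ, LinearMap.add_apply, map_add (Λ a), map_add (Λ b),
      hΛ11 a ha c hc, hΛ12 a ha d hd, hΛ21 b hb c hc, hΛ22 b hb d hd]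
    module
  have key := covTorS_cyclic (𝔪₁ ⊔ 𝔪₂) p𝔨 p₁ p₂ (s / 2) Λ hqm hsum hq hkm hΛ
  have hc : s / 2 * (2 * (s / 2) - 1) = s * (s - 1) / 2 := by ring
  rw [hc] at key
  have i₁ : ∀ X ∈ 𝔪₁, X ∈ 𝔪₁ ⊔ 𝔪₂ := fun X hX => Submodule.mem_sup_left hX
  have i₂ : ∀ X ∈ 𝔪₂, X ∈ 𝔪₁ ⊔ 𝔪₂ := fun X hX => Submodule.mem_sup_right hX
  -- the cyclic formula vanishes when the direction of differentiation is repeated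
  have hdiag : ∀ V ∈ 𝔪₁ ⊔ 𝔪₂, ∀ X ∈ 𝔪₁ ⊔ 𝔪₂, CovTorS 𝔤 Λ p₁ p₂ V V X = 0 := by
    intro V hV X hX
    rw [key V X V hV hX hV, ← lie_skew V X, map_neg, lie_neg, lie_self, map_zero, lie_zero,
      add_zero, neg_add_cancel, smul_zero]
  refine ⟨?_, ?_, ?_, ?_, ?_, ?_⟩
  · intro X hX Y hY
    rw [torS_of_eq_smul (𝔪₁ ⊔ 𝔪₂) p₁ p₂ (s / 2) Λ hΛ X Y hX hY, mul_div_cancel₀ s two_ne_zero,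
      LinearMap.add_apply]
  · intro X hX Y hY Z hZ
    have h : ∀ U ∈ 𝔪₁, ∀ V ∈ 𝔪₁, p𝔨 ⁅U, V⁆ = ⁅U, V⁆ - p₂ ⁅U, V⁆ := fun U hU V hV => by
      have := hsum ⁅U, V⁆
      rw [LinearMap.add_apply, hp₁₁ U hU V hV, zero_add] at this
      rw [this, sub_sub_cancel]
    rw [key X Y Z (i₁ X hX) (i₁ Y hY) (i₁ Z hZ), h X hX Y hY, h Y hY Z hZ, h Z hZ X hX,
      lie_sub, lie_sub, lie_sub, eq_neg_of_add_eq_zero_right (lie_jacobi Z X Y)]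
    module
  · intro X hX Y hY Z hZ
    rw [key X Y Z (i₁ X hX) (i₁ Y hY) (i₂ Z hZ), h₁p𝔨 _ (hb₁₂ Y hY Z hZ),
      h₁p𝔨 _ (hb₂₁ Z hZ X hX), lie_zero, lie_zero, add_zero, add_zero]
  · intro X hX Y hY Z hZ
    rw [key X Y Z (i₂ X hX) (i₂ Y hY) (i₁ Z hZ), h₁p𝔨 _ (hb₂₁ Y hY Z hZ),
      h₁p𝔨 _ (hb₁₂ Z hZ X hX), lie_zero, lie_zero, add_zero, add_zero, hid𝔨 _ (hb₂₂ X hX Y hY)]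
  · intro X hX Y hY Z hZ
    rw [key X Y Z (i₂ X hX) (i₂ Y hY) (i₂ Z hZ), hid𝔨 _ (hb₂₂ X hX Y hY),
      hid𝔨 _ (hb₂₂ Y hY Z hZ), hid𝔨 _ (hb₂₂ Z hZ X hX), lie_jacobi, smul_zero]
  · intro X hX Y _
    rw [Finset.sum_eq_zero, Finset.sum_eq_zero, add_zero]
    · intro k _
      rw [hdiag _ (i₂ _ (hYbmem k)) X hX]
      simp [NegKilling]
    · intro i _
      rw [hdiag _ (i₁ _ (hXbmem i)) X hX]
      simp [NegKilling]
end

section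
/- Work at t = 1/2 (the Killing metric g_{1/2} = B restricted to 𝔪) and write Ric^s := Ric^{s,1/2}, Scal^s := Σ_{i=1}^{d₁} Ric^s(Xᵢ,Xᵢ) + Σ_{k=1}^{d₂} Ric^s(Yₖ,Yₖ), and n := d₁ + d₂. Assume there exist constants Cas₁, Cas₂ ∈ ℝ with A₁(X,Y) = Cas₁·B(X,Y) for all X,Y ∈ 𝔪₁ and A₂(X,Y) = Cas₂·B(X,Y) for all X,Y ∈ 𝔪₂. Then for s = 0 and for s = 2, the ∇^s-Einstein equation Ric^s(X,Y) = (Scal^s/n)·B(X,Y) for all X,Y ∈ 𝔪 holds if and only if Cas₁ = Cas₂ (i.e. if and only if the Killing metric is Einstein). -/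
/-!
At the Killing metric the prescribed connection map is `Λ_s(X)Y = (s/2) [X,Y]_𝔪` on all of `𝔪`
(`connection_eq`). Hence, for `X, E ∈ 𝔪`,
`R^s(X,E)E = (s²/4 - s/2) [[X,E]_𝔪, E]_𝔪 - [[X,E]_𝔨, E]`,
and the first coefficient vanishes exactly when `s = 0` or `s = 2`; this is `curv_eq`. By invariance
of the Killing form, `B(R^s(X,E)E, Y) = B([X,E]_𝔨, [Y,E]_𝔨)` in these two cases
(`negKilling_curv`). Summing over the orthonormal bases and using that `[𝔪₁,𝔪₂]` has no
`𝔨`-component, `Ric^s` is `Cas₁ B` on `𝔪₁`, `Cas₂ B` on `𝔪₂`, and zero on mixed pairs. Such a block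
scalar form is a multiple of `B` if and only if `Cas₁ = Cas₂`; the factor is then necessarily
`Scal^s/n`, with `Scal^s = d₁ Cas₁ + d₂ Cas₂` and `n = d₁ + d₂ > 0` (`einstein_iff`).
-/

open scoped BigOperators

/-- The curvature
`R^{s,1/2}(X,Y)Z := Λ(X)(Λ(Y)Z) − Λ(Y)(Λ(X)Z) − Λ([X,Y]_𝔪)Z − [[X,Y]_𝔨, Z]`. -/
noncomputable def CurvS (𝔤 : Type*) [LieRing 𝔤] [LieAlgebra ℝ 𝔤]
    (Λ : 𝔤 →ₗ[ℝ] 𝔤 →ₗ[ℝ] 𝔤) (p𝔨 p₁ p₂ : 𝔤 →ₗ[ℝ] 𝔤) (X Y Z : 𝔤) : 𝔤 :=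
  Λ X (Λ Y Z) - Λ Y (Λ X Z) - Λ (p₁ ⁅X, Y⁆ + p₂ ⁅X, Y⁆) Z - ⁅p𝔨 ⁅X, Y⁆, Z⁆

/-- The Ricci tensor of `∇^{s,1/2}` with respect to the Killing metric:
`Ric^s(X,Y) := Σᵢ B(R^s(X,Xᵢ)Xᵢ, Y) + Σₖ B(R^s(X,Yₖ)Yₖ, Y)`. -/
noncomputable def RicS (𝔤 : Type*) [LieRing 𝔤] [LieAlgebra ℝ 𝔤]
    (Λ : 𝔤 →ₗ[ℝ] 𝔤 →ₗ[ℝ] 𝔤) (p𝔨 p₁ p₂ : 𝔤 →ₗ[ℝ] 𝔤)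
    {d₁ d₂ : ℕ} (Xb : Fin d₁ → 𝔤) (Yb : Fin d₂ → 𝔤) (X Y : 𝔤) : ℝ :=
  (∑ i, NegKilling 𝔤 (CurvS 𝔤 Λ p𝔨 p₁ p₂ X (Xb i) (Xb i)) Y)
    + ∑ k, NegKilling 𝔤 (CurvS 𝔤 Λ p𝔨 p₁ p₂ X (Yb k) (Yb k)) Y

/-- The scalar curvature `Scal^s := Σᵢ Ric^s(Xᵢ,Xᵢ) + Σₖ Ric^s(Yₖ,Yₖ)`. -/
noncomputable def ScalS (𝔤 : Type*) [LieRing 𝔤] [LieAlgebra ℝ 𝔤]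
    (Λ : 𝔤 →ₗ[ℝ] 𝔤 →ₗ[ℝ] 𝔤) (p𝔨 p₁ p₂ : 𝔤 →ₗ[ℝ] 𝔤)
    {d₁ d₂ : ℕ} (Xb : Fin d₁ → 𝔤) (Yb : Fin d₂ → 𝔤) : ℝ :=
  (∑ i, RicS 𝔤 Λ p𝔨 p₁ p₂ Xb Yb (Xb i) (Xb i))
    + ∑ k, RicS 𝔤 Λ p𝔨 p₁ p₂ Xb Yb (Yb k) (Yb k)

section NegKillingBasics

variable {𝔤 : Type*} [LieRing 𝔤] [LieAlgebra ℝ 𝔤]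

theorem negKilling_add_left (X Y Z : 𝔤) :
    NegKilling 𝔤 (X + Y) Z = NegKilling 𝔤 X Z + NegKilling 𝔤 Y Z := by
  simp only [NegKilling, map_add, LinearMap.add_apply]; ring

theorem negKilling_add_right (X Y Z : 𝔤) :
    NegKilling 𝔤 X (Y + Z) = NegKilling 𝔤 X Y + NegKilling 𝔤 X Z := by
  simp only [NegKilling, map_add]; ring

theorem negKilling_zero_left (Y : 𝔤) : NegKilling 𝔤 0 Y = 0 := by simp [NegKilling]

theorem negKilling_zero_right (X : 𝔤) : NegKilling 𝔤 X 0 = 0 := by simp [NegKilling]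

theorem negKilling_comm (X Y : 𝔤) : NegKilling 𝔤 X Y = NegKilling 𝔤 Y X := by
  simp only [NegKilling, LieModule.traceForm_comm ℝ 𝔤 𝔤 X Y]

/-- Invariance of `B`, in the form used to move the last factor of the curvature across. -/
theorem negKilling_neg_lie (U E Y : 𝔤) :
    NegKilling 𝔤 (-⁅U, E⁆) Y = NegKilling 𝔤 U ⁅Y, E⁆ := by
  simp only [NegKilling, map_neg, LinearMap.neg_apply]
  rw [LieModule.traceForm_apply_lie_apply, ← lie_skew Y E, map_neg]

/-- On `𝔪₁ ⊕ 𝔪₂` the four prescriptions defining `Λ_{s,1/2}` combine into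
`Λ(X)Y = (s/2) [X,Y]_𝔪`. -/
theorem connection_eq {𝔨 𝔪₁ 𝔪₂ : Submodule ℝ 𝔤} {p₁ p₂ : 𝔤 →ₗ[ℝ] 𝔤}
    (hid₁ : ∀ X ∈ 𝔪₁, p₁ X = X)
    (h𝔨p₁ : ∀ X ∈ 𝔨, p₁ X = 0) (h𝔨p₂ : ∀ X ∈ 𝔨, p₂ X = 0)
    (h₁p₂ : ∀ X ∈ 𝔪₁, p₂ X = 0) (h₂p₁ : ∀ X ∈ 𝔪₂, p₁ X = 0)
    (hb₁₁ : ∀ X ∈ 𝔪₁, ∀ Y ∈ 𝔪₁, ⁅X, Y⁆ ∈ 𝔨 ⊔ 𝔪₂)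
    (hb₁₂ : ∀ X ∈ 𝔪₁, ∀ Y ∈ 𝔪₂, ⁅X, Y⁆ ∈ 𝔪₁)
    (hb₂₂ : ∀ X ∈ 𝔪₂, ∀ Y ∈ 𝔪₂, ⁅X, Y⁆ ∈ 𝔨)
    {s : ℝ} {L : 𝔤 →ₗ[ℝ] 𝔤 →ₗ[ℝ] 𝔤}
    (hL11 : ∀ X ∈ 𝔪₁, ∀ Y ∈ 𝔪₁, L X Y = (s / 2) • p₂ ⁅X, Y⁆)
    (hL12 : ∀ X ∈ 𝔪₁, ∀ Y ∈ 𝔪₂, L X Y = (s / 2) • ⁅X, Y⁆)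
    (hL21 : ∀ X ∈ 𝔪₂, ∀ Y ∈ 𝔪₁, L X Y = (s / 2) • ⁅X, Y⁆)
    (hL22 : ∀ X ∈ 𝔪₂, ∀ Y ∈ 𝔪₂, L X Y = 0)
    {X Y : 𝔤} (hX : X ∈ 𝔪₁ ⊔ 𝔪₂) (hY : Y ∈ 𝔪₁ ⊔ 𝔪₂) :
    L X Y = (s / 2) • (p₁ ⁅X, Y⁆ + p₂ ⁅X, Y⁆) := by
  have hb₂₁ : ∀ X ∈ 𝔪₂, ∀ Y ∈ 𝔪₁, ⁅X, Y⁆ ∈ 𝔪₁ := fun X hX Y hY => by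
    rw [← lie_skew]; exact 𝔪₁.neg_mem (hb₁₂ Y hY X hX)
  have h11 : ∀ X ∈ 𝔪₁, ∀ Y ∈ 𝔪₁, p₁ ⁅X, Y⁆ = 0 := fun X hX Y hY => by
    obtain ⟨a, ha, b, hb, hab⟩ := Submodule.mem_sup.1 (hb₁₁ X hX Y hY)
    rw [← hab, map_add, h𝔨p₁ a ha, h₂p₁ b hb, add_zero]
  obtain ⟨X₁, hX₁, X₂, hX₂, rfl⟩ := Submodule.mem_sup.1 hX
  obtain ⟨Y₁, hY₁, Y₂, hY₂, rfl⟩ := Submodule.mem_sup.1 hY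
  simp only [map_add, LinearMap.add_apply, lie_add, add_lie,
    hL11 _ hX₁ _ hY₁, hL12 _ hX₁ _ hY₂, hL21 _ hX₂ _ hY₁, hL22 _ hX₂ _ hY₂,
    h11 _ hX₁ _ hY₁, hid₁ _ (hb₁₂ _ hX₁ _ hY₂), h₁p₂ _ (hb₁₂ _ hX₁ _ hY₂),
    hid₁ _ (hb₂₁ _ hX₂ _ hY₁), h₁p₂ _ (hb₂₁ _ hX₂ _ hY₁),
    h𝔨p₁ _ (hb₂₂ _ hX₂ _ hY₂), h𝔨p₂ _ (hb₂₂ _ hX₂ _ hY₂)]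
  module

/-- For `s (s - 2) = 0` the coefficient `s²/4 - s/2` of `[[X,E]_𝔪, E]_𝔪` in `R^s(X,E)E` vanishes,
leaving only the isotropy term. -/
theorem curv_eq {𝔪 : Submodule ℝ 𝔤} {p𝔨 p₁ p₂ : 𝔤 →ₗ[ℝ] 𝔤}
    (hp : ∀ X, p₁ X + p₂ X ∈ 𝔪)
    {s : ℝ} (hs : s * (s - 2) = 0) {L : 𝔤 →ₗ[ℝ] 𝔤 →ₗ[ℝ] 𝔤}
    (hL : ∀ X ∈ 𝔪, ∀ Y ∈ 𝔪, L X Y = (s / 2) • (p₁ ⁅X, Y⁆ + p₂ ⁅X, Y⁆))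
    {X E : 𝔤} (hX : X ∈ 𝔪) (hE : E ∈ 𝔪) :
    CurvS 𝔤 L p𝔨 p₁ p₂ X E E = -⁅p𝔨 ⁅X, E⁆, E⁆ := by
  have hEE : L E E = 0 := by simp [hL E hE E hE]
  have hW := hp ⁅X, E⁆
  rw [CurvS, hEE, hL X hX E hE, map_smul, hL _ hE _ hW, hL _ hW _ hE,
    ← lie_skew E (p₁ ⁅X, E⁆ + p₂ ⁅X, E⁆)]
  simp only [map_neg, map_zero]
  generalize p₁ ⁅p₁ ⁅X, E⁆ + p₂ ⁅X, E⁆, E⁆ = a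
  generalize p₂ ⁅p₁ ⁅X, E⁆ + p₂ ⁅X, E⁆, E⁆ = b
  have h : (s / 2 * (s / 2) - s / 2) • (a + b) = 0 := by
    rw [show s / 2 * (s / 2) - s / 2 = s * (s - 2) / 4 by ring, hs, zero_div, zero_smul]
  have h' : (s / 2) • (s / 2) • (a + b) = (s / 2) • (a + b) := by
    rw [smul_smul, ← sub_eq_zero, ← sub_smul, h]
  rw [← neg_add, smul_neg, smul_neg, h']
  abel

/-- The summand `B(R^s(X,E)E, Y)` of the Ricci tensor, for `s (s - 2) = 0`. -/
theorem negKilling_curv {𝔨 𝔪₁ 𝔪₂ : Submodule ℝ 𝔤} {p𝔨 p₁ p₂ : 𝔤 →ₗ[ℝ] 𝔤}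
    (hp𝔨mem : ∀ X : 𝔤, p𝔨 X ∈ 𝔨) (hp₁mem : ∀ X : 𝔤, p₁ X ∈ 𝔪₁) (hp₂mem : ∀ X : 𝔤, p₂ X ∈ 𝔪₂)
    (hpsum : ∀ X : 𝔤, p𝔨 X + p₁ X + p₂ X = X)
    (horth𝔨₁ : ∀ X ∈ 𝔨, ∀ Y ∈ 𝔪₁, killingForm ℝ 𝔤 X Y = 0)
    (horth𝔨₂ : ∀ X ∈ 𝔨, ∀ Y ∈ 𝔪₂, killingForm ℝ 𝔤 X Y = 0)
    {s : ℝ} (hs : s * (s - 2) = 0) {L : 𝔤 →ₗ[ℝ] 𝔤 →ₗ[ℝ] 𝔤}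
    (hL : ∀ X ∈ 𝔪₁ ⊔ 𝔪₂, ∀ Y ∈ 𝔪₁ ⊔ 𝔪₂, L X Y = (s / 2) • (p₁ ⁅X, Y⁆ + p₂ ⁅X, Y⁆))
    {X E : 𝔤} (hX : X ∈ 𝔪₁ ⊔ 𝔪₂) (hE : E ∈ 𝔪₁ ⊔ 𝔪₂) (Y : 𝔤) :
    NegKilling 𝔤 (CurvS 𝔤 L p𝔨 p₁ p₂ X E E) Y
      = NegKilling 𝔤 (p𝔨 ⁅X, E⁆) (p𝔨 ⁅Y, E⁆) := by
  rw [curv_eq (𝔪 := 𝔪₁ ⊔ 𝔪₂) (fun Z => Submodule.add_mem_sup (hp₁mem Z) (hp₂mem Z)) hs hL hX hE,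
    negKilling_neg_lie]
  conv_lhs => rw [← hpsum ⁅Y, E⁆]
  simp only [NegKilling, map_add, horth𝔨₁ _ (hp𝔨mem _) _ (hp₁mem _),
    horth𝔨₂ _ (hp𝔨mem _) _ (hp₂mem _), add_zero]

/-- If a Ricci tensor equals `c₁ B` on `𝔪₁`, `c₂ B` on `𝔪₂` and vanishes on mixed pairs, then the
Einstein equation holds if and only if `c₁ = c₂`. -/
theorem einstein_iff {𝔪₁ 𝔪₂ : Submodule ℝ 𝔤}
    (h𝔪₁ : 𝔪₁ ≠ ⊥) (h𝔪₂ : 𝔪₂ ≠ ⊥) {p𝔨 p₁ p₂ : 𝔤 →ₗ[ℝ] 𝔤}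
    (horth₁₂ : ∀ X ∈ 𝔪₁, ∀ Y ∈ 𝔪₂, killingForm ℝ 𝔤 X Y = 0)
    {L : 𝔤 →ₗ[ℝ] 𝔤 →ₗ[ℝ] 𝔤}
    {d₁ d₂ : ℕ} {Xb : Fin d₁ → 𝔤} {Yb : Fin d₂ → 𝔤}
    (hXbmem : ∀ i, Xb i ∈ 𝔪₁) (hYbmem : ∀ k, Yb k ∈ 𝔪₂)
    (hXbon : ∀ i j, NegKilling 𝔤 (Xb i) (Xb j) = if i = j then 1 else 0)
    (hYbon : ∀ k l, NegKilling 𝔤 (Yb k) (Yb l) = if k = l then 1 else 0)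
    (hXbspan : Submodule.span ℝ (Set.range Xb) = 𝔪₁)
    (hYbspan : Submodule.span ℝ (Set.range Yb) = 𝔪₂)
    {c₁ c₂ : ℝ}
    (hRic : ∀ X₁ ∈ 𝔪₁, ∀ X₂ ∈ 𝔪₂, ∀ Y₁ ∈ 𝔪₁, ∀ Y₂ ∈ 𝔪₂,
      RicS 𝔤 L p𝔨 p₁ p₂ Xb Yb (X₁ + X₂) (Y₁ + Y₂)
        = c₁ * NegKilling 𝔤 X₁ Y₁ + c₂ * NegKilling 𝔤 X₂ Y₂) :
    (∀ X ∈ 𝔪₁ ⊔ 𝔪₂, ∀ Y ∈ 𝔪₁ ⊔ 𝔪₂,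
        RicS 𝔤 L p𝔨 p₁ p₂ Xb Yb X Y
          = (ScalS 𝔤 L p𝔨 p₁ p₂ Xb Yb / (d₁ + d₂ : ℝ)) * NegKilling 𝔤 X Y)
      ↔ c₁ = c₂ := by
  have hd₁ : 0 < d₁ := Nat.pos_of_ne_zero fun h => h𝔪₁ <| by
    subst h; rw [← hXbspan, Set.range_eq_empty, Submodule.span_empty]
  have hd₂ : 0 < d₂ := Nat.pos_of_ne_zero fun h => h𝔪₂ <| by
    subst h; rw [← hYbspan, Set.range_eq_empty, Submodule.span_empty]
  have hR₁ : ∀ X ∈ 𝔪₁, RicS 𝔤 L p𝔨 p₁ p₂ Xb Yb X X = c₁ * NegKilling 𝔤 X X := fun X hX => by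
    simpa [negKilling_zero_left] using hRic X hX 0 𝔪₂.zero_mem X hX 0 𝔪₂.zero_mem
  have hR₂ : ∀ X ∈ 𝔪₂, RicS 𝔤 L p𝔨 p₁ p₂ Xb Yb X X = c₂ * NegKilling 𝔤 X X := fun X hX => by
    simpa [negKilling_zero_left] using hRic 0 𝔪₁.zero_mem X hX 0 𝔪₁.zero_mem X hX
  constructor
  · intro h
    have hX := hXbmem ⟨0, hd₁⟩
    have hY := hYbmem ⟨0, hd₂⟩
    have e₁ := h _ (Submodule.mem_sup_left hX) _ (Submodule.mem_sup_left hX)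
    have e₂ := h _ (Submodule.mem_sup_right hY) _ (Submodule.mem_sup_right hY)
    rw [hR₁ _ hX, hXbon, if_pos rfl, mul_one, mul_one] at e₁
    rw [hR₂ _ hY, hYbon, if_pos rfl, mul_one, mul_one] at e₂
    exact e₁.trans e₂.symm
  · rintro rfl X hX Y hY
    have hScal : ScalS 𝔤 L p𝔨 p₁ p₂ Xb Yb = (d₁ + d₂ : ℝ) * c₁ := by
      simp only [ScalS, hR₁ _ (hXbmem _), hR₂ _ (hYbmem _), hXbon, hYbon, if_true, mul_one,
        Finset.sum_const, Finset.card_univ, Fintype.card_fin, nsmul_eq_mul]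
      ring
    have hn : (d₁ + d₂ : ℝ) ≠ 0 := by positivity
    obtain ⟨X₁, hX₁, X₂, hX₂, rfl⟩ := Submodule.mem_sup.1 hX
    obtain ⟨Y₁, hY₁, Y₂, hY₂, rfl⟩ := Submodule.mem_sup.1 hY
    have h12 : NegKilling 𝔤 X₁ Y₂ = 0 := by rw [NegKilling, horth₁₂ _ hX₁ _ hY₂, neg_zero]
    have h21 : NegKilling 𝔤 X₂ Y₁ = 0 := by
      rw [negKilling_comm, NegKilling, horth₁₂ _ hY₁ _ hX₂, neg_zero]
    rw [hScal, mul_div_cancel_left₀ _ hn, hRic _ hX₁ _ hX₂ _ hY₁ _ hY₂]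
    simp only [negKilling_add_left, negKilling_add_right, h12, h21]
    ring

end NegKillingBasics

/-- At `t = 1/2` (Killing metric), assuming the Casimir operators of the two
isotropy summands are scalars `Cas₁`, `Cas₂`, for `s = 0` and for `s = 2` the
`∇^s`-Einstein equation `Ric^s = (Scal^s/n)·B` on `𝔪` holds if and only if
`Cas₁ = Cas₂`, i.e. if and only if the Killing metric is Einstein. -/
theorem stmt_18 (𝔤 : Type*) [LieRing 𝔤] [LieAlgebra ℝ 𝔤] [FiniteDimensional ℝ 𝔤]
    (hκ : ∀ X : 𝔤, X ≠ 0 → killingForm ℝ 𝔤 X X < 0)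
    (𝔨 𝔪₁ 𝔪₂ : Submodule ℝ 𝔤)
    (h𝔪₁ : 𝔪₁ ≠ ⊥) (h𝔪₂ : 𝔪₂ ≠ ⊥)
    (p𝔨 p₁ p₂ : 𝔤 →ₗ[ℝ] 𝔤)
    (hp𝔨mem : ∀ X : 𝔤, p𝔨 X ∈ 𝔨) (hp₁mem : ∀ X : 𝔤, p₁ X ∈ 𝔪₁) (hp₂mem : ∀ X : 𝔤, p₂ X ∈ 𝔪₂)
    (hpsum : ∀ X : 𝔤, p𝔨 X + p₁ X + p₂ X = X)
    (hid𝔨 : ∀ X ∈ 𝔨, p𝔨 X = X) (hid₁ : ∀ X ∈ 𝔪₁, p₁ X = X) (hid₂ : ∀ X ∈ 𝔪₂, p₂ X = X)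
    (h𝔨p₁ : ∀ X ∈ 𝔨, p₁ X = 0) (h𝔨p₂ : ∀ X ∈ 𝔨, p₂ X = 0)
    (h₁p𝔨 : ∀ X ∈ 𝔪₁, p𝔨 X = 0) (h₁p₂ : ∀ X ∈ 𝔪₁, p₂ X = 0)
    (h₂p𝔨 : ∀ X ∈ 𝔪₂, p𝔨 X = 0) (h₂p₁ : ∀ X ∈ 𝔪₂, p₁ X = 0)
    (horth𝔨₁ : ∀ X ∈ 𝔨, ∀ Y ∈ 𝔪₁, killingForm ℝ 𝔤 X Y = 0)
    (horth𝔨₂ : ∀ X ∈ 𝔨, ∀ Y ∈ 𝔪₂, killingForm ℝ 𝔤 X Y = 0)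
    (horth₁₂ : ∀ X ∈ 𝔪₁, ∀ Y ∈ 𝔪₂, killingForm ℝ 𝔤 X Y = 0)
    (h𝔨𝔨 : ∀ X ∈ 𝔨, ∀ Y ∈ 𝔨, ⁅X, Y⁆ ∈ 𝔨)
    (hb𝔨₁ : ∀ X ∈ 𝔨, ∀ Y ∈ 𝔪₁, ⁅X, Y⁆ ∈ 𝔪₁)
    (hb𝔨₂ : ∀ X ∈ 𝔨, ∀ Y ∈ 𝔪₂, ⁅X, Y⁆ ∈ 𝔪₂)
    (hb₁₁ : ∀ X ∈ 𝔪₁, ∀ Y ∈ 𝔪₁, ⁅X, Y⁆ ∈ 𝔨 ⊔ 𝔪₂)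
    (hb₁₂ : ∀ X ∈ 𝔪₁, ∀ Y ∈ 𝔪₂, ⁅X, Y⁆ ∈ 𝔪₁)
    (hb₂₂ : ∀ X ∈ 𝔪₂, ∀ Y ∈ 𝔪₂, ⁅X, Y⁆ ∈ 𝔨)
    (Λ : ℝ → (𝔤 →ₗ[ℝ] 𝔤 →ₗ[ℝ] 𝔤))
    (hΛ11 : ∀ s : ℝ, ∀ X ∈ 𝔪₁, ∀ Y ∈ 𝔪₁, Λ s X Y = (s / 2) • p₂ ⁅X, Y⁆)
    (hΛ12 : ∀ s : ℝ, ∀ X ∈ 𝔪₁, ∀ Y ∈ 𝔪₂, Λ s X Y = (s / 2) • ⁅X, Y⁆)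
    (hΛ21 : ∀ s : ℝ, ∀ X ∈ 𝔪₂, ∀ Y ∈ 𝔪₁, Λ s X Y = (s / 2) • ⁅X, Y⁆)
    (hΛ22 : ∀ s : ℝ, ∀ X ∈ 𝔪₂, ∀ Y ∈ 𝔪₂, Λ s X Y = 0)
    (d₁ d₂ : ℕ) (Xb : Fin d₁ → 𝔤) (Yb : Fin d₂ → 𝔤)
    (hXbmem : ∀ i, Xb i ∈ 𝔪₁) (hYbmem : ∀ k, Yb k ∈ 𝔪₂)
    (hXbon : ∀ i j, NegKilling 𝔤 (Xb i) (Xb j) = if i = j then 1 else 0)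
    (hYbon : ∀ k l, NegKilling 𝔤 (Yb k) (Yb l) = if k = l then 1 else 0)
    (hXbspan : Submodule.span ℝ (Set.range Xb) = 𝔪₁)
    (hYbspan : Submodule.span ℝ (Set.range Yb) = 𝔪₂)
    (Cas₁ Cas₂ : ℝ)
    (hCas₁ : ∀ X ∈ 𝔪₁, ∀ Y ∈ 𝔪₁,
      (∑ i, NegKilling 𝔤 (p𝔨 ⁅X, Xb i⁆) (p𝔨 ⁅Y, Xb i⁆)) = Cas₁ * NegKilling 𝔤 X Y)
    (hCas₂ : ∀ X ∈ 𝔪₂, ∀ Y ∈ 𝔪₂,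
      (∑ k, NegKilling 𝔤 ⁅X, Yb k⁆ ⁅Y, Yb k⁆) = Cas₂ * NegKilling 𝔤 X Y) :
    ((∀ X ∈ 𝔪₁ ⊔ 𝔪₂, ∀ Y ∈ 𝔪₁ ⊔ 𝔪₂,
        RicS 𝔤 (Λ 0) p𝔨 p₁ p₂ Xb Yb X Y
          = (ScalS 𝔤 (Λ 0) p𝔨 p₁ p₂ Xb Yb / (d₁ + d₂ : ℝ)) * NegKilling 𝔤 X Y)
      ↔ Cas₁ = Cas₂)
    ∧ ((∀ X ∈ 𝔪₁ ⊔ 𝔪₂, ∀ Y ∈ 𝔪₁ ⊔ 𝔪₂,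
        RicS 𝔤 (Λ 2) p𝔨 p₁ p₂ Xb Yb X Y
          = (ScalS 𝔤 (Λ 2) p𝔨 p₁ p₂ Xb Yb / (d₁ + d₂ : ℝ)) * NegKilling 𝔤 X Y)
      ↔ Cas₁ = Cas₂) := by
  have key : ∀ s : ℝ, s * (s - 2) = 0 →
      ((∀ X ∈ 𝔪₁ ⊔ 𝔪₂, ∀ Y ∈ 𝔪₁ ⊔ 𝔪₂,
        RicS 𝔤 (Λ s) p𝔨 p₁ p₂ Xb Yb X Y
          = (ScalS 𝔤 (Λ s) p𝔨 p₁ p₂ Xb Yb / (d₁ + d₂ : ℝ)) * NegKilling 𝔤 X Y)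
      ↔ Cas₁ = Cas₂) := by
    intro s hs
    have hL : ∀ X ∈ 𝔪₁ ⊔ 𝔪₂, ∀ Y ∈ 𝔪₁ ⊔ 𝔪₂,
        Λ s X Y = (s / 2) • (p₁ ⁅X, Y⁆ + p₂ ⁅X, Y⁆) := fun X hX Y hY =>
      connection_eq hid₁ h𝔨p₁ h𝔨p₂ h₁p₂ h₂p₁ hb₁₁ hb₁₂ hb₂₂
        (hΛ11 s) (hΛ12 s) (hΛ21 s) (hΛ22 s) hX hY
    refine einstein_iff h𝔪₁ h𝔪₂ horth₁₂ hXbmem hYbmem hXbon hYbon hXbspan hYbspan ?_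
    intro X₁ hX₁ X₂ hX₂ Y₁ hY₁ Y₂ hY₂
    have hX : X₁ + X₂ ∈ 𝔪₁ ⊔ 𝔪₂ := Submodule.add_mem_sup hX₁ hX₂
    have hcurv : ∀ E ∈ 𝔪₁ ⊔ 𝔪₂, NegKilling 𝔤 (CurvS 𝔤 (Λ s) p𝔨 p₁ p₂ (X₁ + X₂) E E) (Y₁ + Y₂)
        = NegKilling 𝔤 (p𝔨 ⁅X₁ + X₂, E⁆) (p𝔨 ⁅Y₁ + Y₂, E⁆) := fun E hE =>
      negKilling_curv hp𝔨mem hp₁mem hp₂mem hpsum horth𝔨₁ horth𝔨₂ hs hL hX hE _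
    have h12 : ∀ X ∈ 𝔪₁, ∀ Y ∈ 𝔪₂, p𝔨 ⁅X, Y⁆ = 0 := fun X hX Y hY =>
      h₁p𝔨 _ (hb₁₂ X hX Y hY)
    have h21 : ∀ X ∈ 𝔪₂, ∀ Y ∈ 𝔪₁, p𝔨 ⁅X, Y⁆ = 0 := fun X hX Y hY => by
      rw [← lie_skew, map_neg, h12 Y hY X hX, neg_zero]
    rw [RicS, ← hCas₁ _ hX₁ _ hY₁, ← hCas₂ _ hX₂ _ hY₂]
    congr 1
    · refine Finset.sum_congr rfl fun i _ => ?_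
      rw [hcurv _ (Submodule.mem_sup_left (hXbmem i)), add_lie, add_lie, map_add, map_add,
        h21 _ hX₂ _ (hXbmem i), h21 _ hY₂ _ (hXbmem i), add_zero, add_zero]
    · refine Finset.sum_congr rfl fun k _ => ?_
      rw [hcurv _ (Submodule.mem_sup_right (hYbmem k)), add_lie, add_lie, map_add, map_add,
        h12 _ hX₁ _ (hYbmem k), h12 _ hY₁ _ (hYbmem k), zero_add, zero_add,
        hid𝔨 _ (hb₂₂ _ hX₂ _ (hYbmem k)), hid𝔨 _ (hb₂₂ _ hY₂ _ (hYbmem k))]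
  exact ⟨key 0 (by norm_num), key 2 (by norm_num)⟩
end
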